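/- Let ρ : Fin r → Equiv.Perm (Fin n) be a string C-group in the two-blocks setup with r = n/2 and n/2 ≥ 7. If the subgroup generated by {ρ j : j ∈ C ∪ L} is transitive on Fin n and R ≠ ∅, then the subgroup generated by {ρ j : j ∈ C} is transitive on Fin n. -/

import Mathlib

/-- A string group generated by involutions (sggi): each generator has order 2 and
nonconsecutive generators commute. -/
def IsSggi {n r : ℕ} (ρ : Fin r → Equiv.Perm (Fin n)) : Prop :=
  (∀ i, orderOf (ρ i) = 2) ∧
  ∀ i j : Fin r, 1 < |((i : ℕ) : ℤ) - ((j : ℕ) : ℤ)| → (ρ i * ρ j) ^ 2 = 1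

/-- A string C-group: an sggi satisfying the intersection property. -/
def IsStringC {n r : ℕ} (ρ : Fin r → Equiv.Perm (Fin n)) : Prop :=
  IsSggi ρ ∧ ∀ J K : Set (Fin r),
    Subgroup.closure (ρ '' J) ⊓ Subgroup.closure (ρ '' K) =
      Subgroup.closure (ρ '' (J ∩ K))

/-!
Suppose that `⟨ρ j : j ∈ C⟩` is intransitive. Then it has an orbit `O` such that `a = ρ i₀`
exchanges `O` and its complement, and `|O| = n / 2` is the number of generators.

Let `ρ j` be a generator that does not commute with `a`. If `a * ρ j` had odd order, the orbits of
the dihedral group `⟨a, ρ j⟩` would cut out on `O` classes of odd size, and an involution commuting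
with `a` and `ρ j` that preserves such a class fixes it pointwise. So, for an elementary abelian
`2`-group of such involutions, a class of several points behaves like a single point; the generators
at distance from `a` and `ρ j` supply a group too large for the `n / 2` points of `O`.

Hence `⟨a, ρ j⟩` has a central involution other than `a`. Put it in place of `ρ j`, drop `a`, and
let the centralizer of `a` act on the `n / 2` pairs `{x, a x}`: this gives `N` involutions on
`N + 1` points, whose intersection property survives away from the replaced members. By the same
count of points, sufficiently many products of two consecutive members are 3-cycles. If the members
not replaced were transitive, chains of these 3-cycles would generate the alternating group within
subgroups that the intersection property keeps apart. But they are transitive, because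
`⟨ρ j : j ∈ C ∪ {i₀}⟩` is.
-/

section ElementaryAbelian

open MulAction

variable {G : Type*} [Group G]

/-- `E` is an elementary abelian `2`-group of rank at least `e`: a group of exponent dividing two
with at least `2 ^ e` elements. -/
structure IsElementaryTwo (e : ℕ) (E : Subgroup G) : Prop where
  mul_self : ∀ f ∈ E, f * f = 1
  two_pow_le_card : 2 ^ e ≤ Nat.card E

/-- The `2`-rank of `K` is at least `e`. -/
def TwoRankAtLeast (e : ℕ) (K : Subgroup G) : Prop :=
  ∃ E ≤ K, IsElementaryTwo e E

lemma commute_of_mem_closure {s t : Set G} (h : ∀ x ∈ s, ∀ y ∈ t, Commute x y) {x y : G}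
    (hx : x ∈ Subgroup.closure s) (hy : y ∈ Subgroup.closure t) : Commute x y := by
  have hs : s ⊆ Subgroup.centralizer (Subgroup.closure t : Set G) := by
    rw [Subgroup.centralizer_closure]
    exact fun x hx => Subgroup.mem_centralizer_iff.2 fun y hy => (h x hx y hy).symm
  exact (Subgroup.mem_centralizer_iff.1 ((Subgroup.closure_le _).2 hs hx) y hy).symm

lemma commute_of_mul_self {f k : G} (hf : f * f = 1) (hk : k * k = 1)
    (hfk : f * k * (f * k) = 1) : Commute f k := by
  rw [Commute, SemiconjBy, ← inv_eq_of_mul_eq_one_left hfk, mul_inv_rev,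
    inv_eq_of_mul_eq_one_left hf, inv_eq_of_mul_eq_one_left hk]

lemma mul_mul_self_of_commute {f k : G} (h : Commute f k) (hf : f * f = 1) (hk : k * k = 1) :
    f * k * (f * k) = 1 := by
  rw [h.symm.mul_mul_mul_comm, hf, hk, one_mul]

lemma exists_mul_eq_of_mem_sup {E F : Subgroup G} (hEF : ∀ f ∈ E, ∀ k ∈ F, Commute f k) {x : G}
    (hx : x ∈ E ⊔ F) : ∃ f ∈ E, ∃ k ∈ F, f * k = x := by
  have hE : E ≤ Subgroup.centralizer (F : Set G) := fun f hf =>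
    Subgroup.mem_centralizer_iff.2 fun k hk => (hEF f hf k hk).symm
  rw [← SetLike.mem_coe, Subgroup.coe_mul_of_left_le_normalizer_right E F
    (hE.trans (Subgroup.centralizer_le_normalizer _))] at hx
  exact Set.mem_mul.1 hx

lemma mul_self_of_mem_sup {E F : Subgroup G} (hE : ∀ f ∈ E, f * f = 1) (hF : ∀ k ∈ F, k * k = 1)
    (hEF : ∀ f ∈ E, ∀ k ∈ F, Commute f k) {x : G} (hx : x ∈ E ⊔ F) : x * x = 1 := by
  obtain ⟨f, hf, k, hk, rfl⟩ := exists_mul_eq_of_mem_sup hEF hx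
  exact mul_mul_self_of_commute (hEF f hf k hk) (hE f hf) (hF k hk)

lemma IsElementaryTwo.commute {e : ℕ} {E : Subgroup G} (h : IsElementaryTwo e E) {f k : G}
    (hf : f ∈ E) (hk : k ∈ E) : Commute f k :=
  commute_of_mul_self (h.mul_self f hf) (h.mul_self k hk) (h.mul_self _ (E.mul_mem hf hk))

lemma isElementaryTwo_bot : IsElementaryTwo 0 (⊥ : Subgroup G) :=
  ⟨by simp, by simp⟩

lemma isElementaryTwo_zpowers [Finite G] {x : G} (hx : x * x = 1) (hx1 : x ≠ 1) :
    IsElementaryTwo 1 (Subgroup.zpowers x) := by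
  refine ⟨?_, ?_⟩
  · rintro _ ⟨i, rfl⟩
    rw [← (Commute.refl x).mul_zpow, hx, one_zpow]
  · have : Nontrivial (Subgroup.zpowers x) :=
      (Subgroup.nontrivial_iff_exists_ne_one _).2 ⟨x, Subgroup.mem_zpowers x, hx1⟩
    exact Finite.one_lt_card

lemma IsElementaryTwo.sup [Finite G] {e d : ℕ} {E F : Subgroup G} (hE : IsElementaryTwo e E)
    (hF : IsElementaryTwo d F) (hEF : ∀ f ∈ E, ∀ k ∈ F, Commute f k) (hd : Disjoint E F) :
    IsElementaryTwo (e + d) (E ⊔ F) where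
  mul_self _ hf := mul_self_of_mem_sup hE.mul_self hF.mul_self hEF hf
  two_pow_le_card := by
    let m : E × F → ↥(E ⊔ F) := fun p => ⟨p.1 * p.2, Subgroup.mul_mem_sup p.1.2 p.2.2⟩
    have hm : Function.Injective m := fun p q hpq =>
      Subgroup.mul_injective_of_disjoint hd (congrArg Subtype.val hpq)
    calc 2 ^ (e + d) = 2 ^ e * 2 ^ d := pow_add 2 e d
      _ ≤ Nat.card E * Nat.card F := Nat.mul_le_mul hE.two_pow_le_card hF.two_pow_le_card
      _ = Nat.card (E × F) := (Nat.card_prod E F).symm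
      _ ≤ Nat.card ↥(E ⊔ F) := Nat.card_le_card_of_injective m hm

lemma IsElementaryTwo.exists_card_orbit [Finite G] {e : ℕ} {E : Subgroup G}
    (h : IsElementaryTwo e E) {α : Type*} [MulAction G α] (x : α) :
    ∃ k, Nat.card (orbit E x) = 2 ^ k ∧ IsElementaryTwo (e - k) (E ⊓ stabilizer G x) := by
  have hp : IsPGroup 2 E := fun f => ⟨1, Subtype.ext (by simpa [pow_two] using h.mul_self f f.2)⟩
  have : Fact (Nat.Prime 2) := ⟨Nat.prime_two⟩
  have : Finite (orbit E x) := Set.finite_range _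
  obtain ⟨k, hk⟩ := hp.card_orbit x
  refine ⟨k, hk, fun f hf => h.mul_self f hf.1, ?_⟩
  have hstab : Nat.card (stabilizer E x) = Nat.card ↥(E ⊓ stabilizer G x) :=
    Nat.card_congr ⟨fun f => ⟨f.1.1, f.1.2, f.2⟩, fun f => ⟨⟨f.1, f.2.1⟩, f.2.2⟩,
      fun _ => rfl, fun _ => rfl⟩
  have hcard : 2 ^ e ≤ 2 ^ k * Nat.card ↥(E ⊓ stabilizer G x) := by
    rw [← hk, ← hstab, Nat.card_coe_set_eq, ← index_stabilizer, mul_comm,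
      Subgroup.card_mul_index]
    exact h.two_pow_le_card
  rcases le_total k e with hke | hek
  · rw [← Nat.sub_add_cancel hke, pow_add, mul_comm] at hcard
    simpa using Nat.le_of_mul_le_mul_left hcard (by positivity)
  · rw [Nat.sub_eq_zero_of_le hek, pow_zero]
    exact Nat.card_pos

end ElementaryAbelian

section OddSystem

open Equiv MulAction

variable {α : Type*}

/-- `E` leaves `s` invariant and acts faithfully on it. -/
structure ActsFaithfullyOn (E : Subgroup (Perm α)) (s : Finset α) : Prop where
  apply_mem : ∀ f ∈ E, ∀ y ∈ s, f y ∈ s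
  eq_one : ∀ f ∈ E, (∀ y ∈ s, f y = y) → f = 1

/-- An equivalence relation preserved by `E` whose classes meet `s` in one or at least three
points, and such that elements of `E` preserving a class fix it pointwise. The example to have in
mind is the relation of lying in the same cycle of a permutation of odd order which commutes with
the elementary abelian `2`-group `E`. -/
structure IsOddSystem (E : Subgroup (Perm α)) (s : Finset α) (r : α → α → Prop) : Prop where
  equivalence : Equivalence r
  rel_apply : ∀ f ∈ E, ∀ x y, r x y → r (f x) (f y)
  apply_eq_of_rel : ∀ f ∈ E, ∀ x ∈ s, ∀ y ∈ s, r x y → f x = x → f y = y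
  apply_eq_self : ∀ f ∈ E, ∀ x ∈ s, r x (f x) → f x = x
  exists_third : ∀ x ∈ s, ∀ y ∈ s, r x y → y ≠ x → ∃ z ∈ s, r x z ∧ z ≠ x ∧ z ≠ y

open scoped Classical in
/-- The points of `s` related to `x`. -/
noncomputable def relClass (s : Finset α) (r : α → α → Prop) (x : α) : Finset α :=
  {y ∈ s | r x y}

open scoped Classical in
/-- The part in `s` of the union of the translates under `E` of the class of `x`. -/
noncomputable def relTranslates (E : Subgroup (Perm α)) (s : Finset α) (r : α → α → Prop)
    (x : α) : Finset α :=
  {y ∈ s | ∃ f ∈ E, r (f x) y}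

open scoped Classical in
/-- The points of `s` related to a different point of `s`. If `r` is the relation of lying in the
same cycle of a permutation, these are the points moved by the permutation. -/
noncomputable def movedBy (s : Finset α) (r : α → α → Prop) : Finset α :=
  {z ∈ s | ∃ w ∈ s, r z w ∧ w ≠ z}

variable {E : Subgroup (Perm α)} {s : Finset α} {r : α → α → Prop} {e : ℕ} {x y z : α}

lemma mem_relClass : y ∈ relClass s r x ↔ y ∈ s ∧ r x y := by
  simp only [relClass, Finset.mem_filter]

lemma mem_relTranslates : y ∈ relTranslates E s r x ↔ y ∈ s ∧ ∃ f ∈ E, r (f x) y := by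
  simp only [relTranslates, Finset.mem_filter]

lemma mem_movedBy : z ∈ movedBy s r ↔ z ∈ s ∧ ∃ w ∈ s, r z w ∧ w ≠ z := by
  simp only [movedBy, Finset.mem_filter]

lemma relTranslates_subset : relTranslates E s r x ⊆ s := fun _ hy => (mem_relTranslates.1 hy).1

lemma IsElementaryTwo.apply_apply {E : Subgroup (Perm α)} (hE : IsElementaryTwo e E) {f : Perm α}
    (hf : f ∈ E) (x : α) : f (f x) = x :=
  Perm.congr_fun (hE.mul_self f hf) x

lemma isOddSystem_eq (E : Subgroup (Perm α)) (s : Finset α) : IsOddSystem E s Eq where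
  equivalence := eq_equivalence
  rel_apply _ _ _ _ h := congrArg _ h
  apply_eq_of_rel := by rintro f - x - _ - rfl h; exact h
  apply_eq_self _ _ _ _ h := h.symm
  exists_third _ _ _ _ h hne := absurd h.symm hne

namespace IsOddSystem

lemma mem_relTranslates_of_rel (h : IsOddSystem E s r) (hy : y ∈ relTranslates E s r x)
    (hz : z ∈ s) (hyz : r y z) : z ∈ relTranslates E s r x := by
  obtain ⟨-, f, hf, hfy⟩ := mem_relTranslates.1 hy
  exact mem_relTranslates.2 ⟨hz, f, hf, h.equivalence.trans hfy hyz⟩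

lemma three_le_card_relClass (h : IsOddSystem E s r) (hx : x ∈ s) (hy : y ∈ s) (hxy : r x y)
    (hne : y ≠ x) : 3 ≤ (relClass s r x).card := by
  obtain ⟨z, hz, hxz, hzx, hzy⟩ := h.exists_third x hx y hy hxy hne
  exact Finset.two_lt_card.2 ⟨x, mem_relClass.2 ⟨hx, h.equivalence.refl x⟩, y,
    mem_relClass.2 ⟨hy, hxy⟩, z, mem_relClass.2 ⟨hz, hxz⟩, hne.symm, hzx.symm, hzy.symm⟩

lemma three_le_card_relClass_of_mem_movedBy (h : IsOddSystem E s r) (hx : x ∈ movedBy s r) :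
    3 ≤ (relClass s r x).card := by
  obtain ⟨hxs, y, hy, hxy, hne⟩ := mem_movedBy.1 hx
  exact h.three_le_card_relClass hxs hy hxy hne

lemma relClass_apply (h : IsOddSystem E s r) (hE : IsElementaryTwo e E)
    (hs : ActsFaithfullyOn E s) {f : Perm α} (hf : f ∈ E) (x : α) :
    relClass s r (f x) = (relClass s r x).map f.toEmbedding := by
  ext z
  simp only [mem_relClass, Finset.mem_map, Equiv.coe_toEmbedding]
  constructor
  · rintro ⟨hz, hr⟩
    have hfz := h.rel_apply f hf _ _ hr
    rw [hE.apply_apply hf] at hfz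
    exact ⟨f z, ⟨hs.apply_mem f hf z hz, hfz⟩, hE.apply_apply hf z⟩
  · rintro ⟨w, ⟨hw, hr⟩, rfl⟩
    exact ⟨hs.apply_mem f hf w hw, h.rel_apply f hf _ _ hr⟩

lemma apply_eq_apply_of_rel (h : IsOddSystem E s r) (hE : IsElementaryTwo e E) (hx : x ∈ s)
    {f k : Perm α} (hf : f ∈ E) (hk : k ∈ E) (hr : r (f x) (k x)) : f x = k x := by
  have hfk := h.rel_apply f hf _ _ hr
  rw [hE.apply_apply hf] at hfk
  have hfix : f (k x) = x := h.apply_eq_self (f * k) (E.mul_mem hf hk) x hx hfk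
  rw [← hE.apply_apply hf (k x), hfix]

lemma card_relTranslates [Finite α] (h : IsOddSystem E s r) (hE : IsElementaryTwo e E)
    (hs : ActsFaithfullyOn E s) (hx : x ∈ s) :
    (relTranslates E s r x).card = Nat.card (orbit E x) * (relClass s r x).card := by
  classical
  have := Fintype.ofFinite (orbit E x)
  have htrans : relTranslates E s r x = (orbit E x).toFinset.biUnion (relClass s r) := by
    ext y
    simp only [mem_relTranslates, Finset.mem_biUnion, Set.mem_toFinset, mem_relClass]
    constructor
    · rintro ⟨hy, f, hf, hr⟩
      exact ⟨f x, ⟨⟨f, hf⟩, rfl⟩, hy, hr⟩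
    · rintro ⟨_, ⟨f, rfl⟩, hy, hr⟩
      exact ⟨hy, f, f.2, hr⟩
  rw [htrans, Finset.card_biUnion, Finset.sum_const_nat (m := (relClass s r x).card),
    Set.toFinset_card, Nat.card_eq_fintype_card]
  · intro y hy
    obtain ⟨f, rfl⟩ := Set.mem_toFinset.1 hy
    exact (congrArg Finset.card (h.relClass_apply hE hs f.2 x)).trans (Finset.card_map _)
  · intro y hy z hz hyz
    obtain ⟨f, rfl⟩ := Set.mem_toFinset.1 hy
    obtain ⟨k, rfl⟩ := Set.mem_toFinset.1 hz
    refine Finset.disjoint_left.2 fun w hw hw' => hyz (h.apply_eq_apply_of_rel hE hx f.2 k.2 ?_)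
    exact h.equivalence.trans (mem_relClass.1 hw).2 (h.equivalence.symm (mem_relClass.1 hw').2)

lemma apply_eq_self_of_mem_relTranslates (h : IsOddSystem E s r) (hE : IsElementaryTwo e E)
    (hs : ActsFaithfullyOn E s) (hx : x ∈ s) {f : Perm α}
    (hf : f ∈ E ⊓ stabilizer (Perm α) x) (hy : y ∈ relTranslates E s r x) : f y = y := by
  obtain ⟨hys, k, hk, hr⟩ := mem_relTranslates.1 hy
  refine h.apply_eq_of_rel f hf.1 (k x) (hs.apply_mem k hk x hx) y hys hr ?_
  have hfx : f x = x := hf.2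
  calc f (k x) = k (f x) := Perm.congr_fun (hE.commute hf.1 hk) x
    _ = k x := by rw [hfx]

variable [DecidableEq α]

lemma actsFaithfullyOn_sdiff (h : IsOddSystem E s r) (hE : IsElementaryTwo e E)
    (hs : ActsFaithfullyOn E s) (hx : x ∈ s) :
    ActsFaithfullyOn (E ⊓ stabilizer (Perm α) x) (s \ relTranslates E s r x) where
  apply_mem f hf y hy := by
    rw [Finset.mem_sdiff] at hy ⊢
    refine ⟨hs.apply_mem f hf.1 y hy.1, fun hfy => hy.2 ?_⟩
    rwa [f.injective (h.apply_eq_self_of_mem_relTranslates hE hs hx hf hfy)] at hfy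
  eq_one f hf hfix := hs.eq_one f hf.1 fun y hy => by
    by_cases hyt : y ∈ relTranslates E s r x
    · exact h.apply_eq_self_of_mem_relTranslates hE hs hx hf hyt
    · exact hfix y (Finset.mem_sdiff.2 ⟨hy, hyt⟩)

lemma sdiff (h : IsOddSystem E s r) (x : α) :
    IsOddSystem (E ⊓ stabilizer (Perm α) x) (s \ relTranslates E s r x) r where
  equivalence := h.equivalence
  rel_apply f hf := h.rel_apply f hf.1
  apply_eq_of_rel f hf y hy z hz :=
    h.apply_eq_of_rel f hf.1 y (Finset.mem_sdiff.1 hy).1 z (Finset.mem_sdiff.1 hz).1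
  apply_eq_self f hf y hy := h.apply_eq_self f hf.1 y (Finset.mem_sdiff.1 hy).1
  exists_third y hy z hz hr hne := by
    rw [Finset.mem_sdiff] at hy hz
    obtain ⟨w, hw, hyw, hwy, hwz⟩ := h.exists_third y hy.1 z hz.1 hr hne
    exact ⟨w, Finset.mem_sdiff.2 ⟨hw, fun hwt =>
      hy.2 (h.mem_relTranslates_of_rel hwt hy.1 (h.equivalence.symm hyw))⟩, hyw, hwy, hwz⟩

end IsOddSystem

lemma two_mul_le_two_pow (k : ℕ) : 2 * k ≤ 2 ^ k := by
  rcases k with _ | k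
  · exact Nat.zero_le _
  · rw [pow_succ']
    exact Nat.mul_le_mul_left 2 Nat.lt_two_pow_self

lemma two_mul_add_three_le (k : ℕ) : 2 * k + 3 ≤ 2 ^ k * 3 := by
  have := two_mul_le_two_pow k
  have := Nat.one_le_two_pow (n := k)
  omega

lemma two_mul_add_eight_le {k : ℕ} (hk : 2 ≤ k) : 2 * k + 8 ≤ 2 ^ k * 3 := by
  have := two_mul_le_two_pow k
  have : 2 ^ 2 ≤ 2 ^ k := Nat.pow_le_pow_right two_pos hk
  omega

lemma IsElementaryTwo.two_mul_le_card [Finite α] {e : ℕ} {E : Subgroup (Perm α)} {s : Finset α}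
    (hE : IsElementaryTwo e E) (hs : ActsFaithfullyOn E s) : 2 * e ≤ s.card := by
  classical
  induction hn : s.card using Nat.strong_induction_on generalizing e E s with
  | _ n ih =>
  subst hn
  rcases s.eq_empty_or_nonempty with rfl | ⟨x, hx⟩
  · have hbot : E = ⊥ := (Subgroup.eq_bot_iff_forall E).2 fun f hf => hs.eq_one f hf (by simp)
    have hcard := hE.two_pow_le_card
    rw [hbot, Subgroup.card_bot] at hcard
    have := two_mul_le_two_pow e
    rw [Finset.card_empty]
    omega
  · have h := isOddSystem_eq E s
    obtain ⟨k, hk, hE'⟩ := hE.exists_card_orbit x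
    have hclass : relClass s Eq x = {x} := by
      ext y
      rw [mem_relClass, Finset.mem_singleton, eq_comm (a := x)]
      exact ⟨And.right, fun hy => ⟨hy ▸ hx, hy⟩⟩
    have htrans := h.card_relTranslates hE hs hx
    rw [hk, hclass, Finset.card_singleton, mul_one] at htrans
    have hsdiff := Finset.card_sdiff_add_card_eq_card (relTranslates_subset (E := E) (s := s)
      (r := Eq) (x := x))
    have := Nat.one_le_two_pow (n := k)
    have := ih _ (by omega) hE' (h.actsFaithfullyOn_sdiff hE hs hx) rfl
    have := two_mul_le_two_pow k
    omega

namespace IsOddSystem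

lemma exists_card_relTranslates [Finite α] (h : IsOddSystem E s r)
    (hE : IsElementaryTwo e E) (hs : ActsFaithfullyOn E s) (hx : x ∈ s) :
    ∃ k, Nat.card (orbit E x) = 2 ^ k ∧
      (relTranslates E s r x).card = 2 ^ k * (relClass s r x).card ∧
      IsElementaryTwo (e - k) (E ⊓ stabilizer (Perm α) x) ∧
      2 * (e - k) + (relTranslates E s r x).card ≤ s.card := by
  classical
  obtain ⟨k, hk, hE'⟩ := hE.exists_card_orbit x
  refine ⟨k, hk, hk ▸ h.card_relTranslates hE hs hx, hE', ?_⟩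
  have hle := hE'.two_mul_le_card (h.actsFaithfullyOn_sdiff hE hs hx)
  have hsdiff := Finset.card_sdiff_add_card_eq_card
    (relTranslates_subset (E := E) (s := s) (r := r) (x := x))
  omega

lemma two_mul_add_three_le_card [Finite α] (h : IsOddSystem E s r) (hE : IsElementaryTwo e E)
    (hs : ActsFaithfullyOn E s) (hx : x ∈ movedBy s r) : 2 * e + 3 ≤ s.card := by
  classical
  obtain ⟨k, -, htrans, -, hle⟩ := h.exists_card_relTranslates hE hs (mem_movedBy.1 hx).1
  have hmul := Nat.mul_le_mul_left (2 ^ k) (h.three_le_card_relClass_of_mem_movedBy hx)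
  have := two_mul_add_three_le k
  omega

lemma relTranslates_subset_movedBy (h : IsOddSystem E s r) (hs : ActsFaithfullyOn E s)
    (hx : x ∈ movedBy s r) : relTranslates E s r x ⊆ movedBy s r := by
  obtain ⟨hxs, y, hy, hxy, hne⟩ := mem_movedBy.1 hx
  intro z hz
  obtain ⟨hzs, f, hf, hr⟩ := mem_relTranslates.1 hz
  refine mem_movedBy.2 ⟨hzs, ?_⟩
  by_cases hzx : f x = z
  · exact ⟨f y, hs.apply_mem f hf y hy, hzx ▸ h.rel_apply f hf _ _ hxy,
      fun hc => hne (f.injective (hc.trans hzx.symm))⟩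
  · exact ⟨f x, hs.apply_mem f hf x hxs, h.equivalence.symm hr, hzx⟩

lemma movedBy_sdiff (h : IsOddSystem E s r) [DecidableEq α] (hy : y ∈ movedBy s r)
    (hyx : y ∉ relTranslates E s r x) : y ∈ movedBy (s \ relTranslates E s r x) r := by
  obtain ⟨hys, z, hz, hyz, hne⟩ := mem_movedBy.1 hy
  exact mem_movedBy.2 ⟨Finset.mem_sdiff.2 ⟨hys, hyx⟩, z, Finset.mem_sdiff.2 ⟨hz, fun hzx =>
    hyx (h.mem_relTranslates_of_rel hzx hys (h.equivalence.symm hyz))⟩, hyz, hne⟩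

lemma movedBy_eq_relTranslates [Finite α] (h : IsOddSystem E s r) (hE : IsElementaryTwo e E)
    (hs : ActsFaithfullyOn E s) (hcard : s.card ≤ 2 * e + 4) (hx : x ∈ movedBy s r) :
    movedBy s r = relTranslates E s r x := by
  classical
  have hxs := (mem_movedBy.1 hx).1
  refine (h.relTranslates_subset_movedBy hs hx).antisymm' fun z hz => ?_
  by_contra hzx
  obtain ⟨k, -, htrans, hE', -⟩ := h.exists_card_relTranslates hE hs hxs
  have hle := (h.sdiff x).two_mul_add_three_le_card hE' (h.actsFaithfullyOn_sdiff hE hs hxs)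
    (h.movedBy_sdiff hz hzx)
  have hsdiff := Finset.card_sdiff_add_card_eq_card
    (relTranslates_subset (E := E) (s := s) (r := r) (x := x))
  have hmul := Nat.mul_le_mul_left (2 ^ k) (h.three_le_card_relClass_of_mem_movedBy hx)
  have := two_mul_add_three_le k
  omega

lemma card_movedBy_of_card_le [Finite α] (h : IsOddSystem E s r) (hE : IsElementaryTwo e E)
    (hs : ActsFaithfullyOn E s) (hcard : s.card ≤ 2 * e + 4) (hx : x ∈ movedBy s r) :
    ((∀ f ∈ E, ∀ z ∈ movedBy s r, f z = z) ∧ (∀ z ∈ movedBy s r, r x z) ∧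
        ((movedBy s r).card = 3 ∨ (movedBy s r).card = 4 ∧ s.card = 2 * e + 4)) ∨
      ((movedBy s r).card = 6 ∧ s.card = 2 * e + 4 ∧ (relClass s r x).card = 3 ∧
        ∃ E' ≤ E, IsElementaryTwo (e - 1) E' ∧ ∀ f ∈ E', ∀ z ∈ movedBy s r, f z = z) := by
  classical
  have hxs := (mem_movedBy.1 hx).1
  have hmoved := h.movedBy_eq_relTranslates hE hs hcard hx
  obtain ⟨k, horbit, htrans, hE', hle⟩ := h.exists_card_relTranslates hE hs hxs
  have hclass := h.three_le_card_relClass_of_mem_movedBy hx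
  have hmul := Nat.mul_le_mul_left (2 ^ k) hclass
  rw [← hmoved] at htrans hle
  have hk : k ≤ 1 := by
    by_contra hk
    have := two_mul_add_eight_le (k := k) (by omega)
    omega
  obtain rfl | rfl : k = 0 ∨ k = 1 := by omega
  · left
    have hfix : ∀ f ∈ E, f x = x := fun f hf => by
      have hx' : orbit E x = {x} := by
        obtain ⟨y, hy⟩ := Set.ncard_eq_one.1 (horbit : (orbit E x).ncard = 1)
        have := mem_orbit_self (M := E) x
        rw [hy, Set.mem_singleton_iff] at this
        rw [hy, this]
      exact hx'.subset ⟨⟨f, hf⟩, rfl⟩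
    have hrel : ∀ z ∈ movedBy s r, r x z := fun z hz => by
      obtain ⟨-, f, hf, hr⟩ := mem_relTranslates.1 (hmoved ▸ hz)
      rwa [hfix f hf] at hr
    exact ⟨fun f hf z hz => h.apply_eq_of_rel f hf x hxs z (mem_movedBy.1 hz).1 (hrel z hz)
      (hfix f hf), hrel, by omega⟩
  · right
    exact ⟨by omega, by omega, by omega, _, inf_le_left, hE', fun f hf z hz =>
      h.apply_eq_self_of_mem_relTranslates hE hs hxs hf (hmoved ▸ hz)⟩

end IsOddSystem

end OddSystem

section OddOrder

open Equiv MulAction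

lemma actsFaithfullyOn_univ {α : Type*} [Fintype α] (E : Subgroup (Perm α)) :
    ActsFaithfullyOn E Finset.univ :=
  ⟨fun _ _ _ _ => Finset.mem_univ _, fun _ _ h => Equiv.ext fun y => h y (Finset.mem_univ y)⟩

lemma apply_zpow_apply_of_commute {α : Type*} {f κ : Perm α} (h : Commute f κ) (i : ℤ) (x : α) :
    f ((κ ^ i) x) = (κ ^ i) (f x) :=
  Perm.congr_fun (h.zpow_right i).eq x

lemma zpow_apply_eq_self_of_two_mul {α : Type*} {κ : Perm α} (ho : Odd (orderOf κ)) {i : ℤ}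
    {x : α} (h : (κ ^ (2 * i)) x = x) : (κ ^ i) x = x := by
  obtain ⟨m, hm⟩ := exists_pow_eq_self_of_coprime (Nat.coprime_two_left.2 ho)
  have hpow : κ ^ i = (κ ^ (2 * i)) ^ m := by
    conv_lhs => rw [← hm]
    rw [zpow_mul, ← zpow_natCast, ← zpow_natCast, ← zpow_natCast, ← zpow_mul, ← zpow_mul,
      ← zpow_mul, ← zpow_mul]
    congr 1
    push_cast
    ring
  rw [hpow]
  exact Perm.pow_apply_eq_self_of_apply_eq_self h m

lemma apply_eq_self_of_sameCycle {α : Type*} {f κ : Perm α} (ho : Odd (orderOf κ))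
    (hf : f * f = 1) (hc : Commute f κ) {x : α} (h : κ.SameCycle x (f x)) : f x = x := by
  obtain ⟨i, hi⟩ := h
  have hff : f (f x) = x := Perm.congr_fun hf x
  rw [← hi, apply_zpow_apply_of_commute hc, ← hi, ← Perm.mul_apply, ← zpow_add, ← two_mul] at hff
  rw [← hi, zpow_apply_eq_self_of_two_mul ho hff]

lemma isOddSystem_sameCycle {α : Type*} {κ : Perm α} {E : Subgroup (Perm α)} {s : Finset α}
    (ho : Odd (orderOf κ)) (hE : ∀ f ∈ E, f * f = 1) (hc : ∀ f ∈ E, Commute f κ)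
    (hs : ∀ y ∈ s, ∀ z, κ.SameCycle y z → z ∈ s) : IsOddSystem E s κ.SameCycle where
  equivalence := Perm.SameCycle.equivalence κ
  rel_apply := by
    rintro f hf x _ ⟨i, rfl⟩
    exact ⟨i, (apply_zpow_apply_of_commute (hc f hf) i x).symm⟩
  apply_eq_of_rel := by
    rintro f hf x - _ - ⟨i, rfl⟩ hfx
    rw [apply_zpow_apply_of_commute (hc f hf), hfx]
  apply_eq_self f hf x _ h := apply_eq_self_of_sameCycle ho (hE f hf) (hc f hf) h
  exists_third := by
    rintro x hx _ - ⟨i, rfl⟩ hne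
    refine ⟨(κ ^ (2 * i)) x, hs x hx _ ⟨_, rfl⟩, ⟨_, rfl⟩,
      fun h => hne (zpow_apply_eq_self_of_two_mul ho h), fun h => hne ?_⟩
    rw [two_mul, zpow_add, Perm.mul_apply] at h
    exact (κ ^ i).injective h

variable {α : Type*} [Fintype α] [DecidableEq α] {κ l : Perm α} {E : Subgroup (Perm α)} {e : ℕ}

lemma movedBy_sameCycle {s : Finset α} (hs : κ.support ⊆ s) :
    movedBy s κ.SameCycle = κ.support := by
  ext z
  rw [mem_movedBy, Perm.mem_support]
  constructor
  · rintro ⟨-, _, -, ⟨i, rfl⟩, hne⟩ hz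
    exact hne (Perm.zpow_apply_eq_self_of_apply_eq_self hz i)
  · intro hz
    exact ⟨hs (Perm.mem_support.2 hz), κ z,
      hs (Perm.apply_mem_support.2 (Perm.mem_support.2 hz)),
      Perm.sameCycle_apply_right.2 (.refl _ _), hz⟩

lemma relClass_univ_sameCycle {z : α} (hz : z ∈ κ.support) :
    relClass Finset.univ κ.SameCycle z = (κ.cycleOf z).support := by
  ext y
  simp only [mem_relClass, Finset.mem_univ, true_and, Perm.mem_support_cycleOf_iff, hz, and_true]

lemma pow_three_eq_one_of_card_support_cycleOf
    (h : ∀ z ∈ κ.support, (κ.cycleOf z).support.card = 3) : κ ^ 3 = 1 := by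
  ext1 z
  by_cases hz : z ∈ κ.support
  · rw [← Perm.pow_mod_card_support_cycleOf_self_apply, h z hz, Nat.mod_self, pow_zero]
  · rw [Perm.pow_apply_eq_self_of_apply_eq_self (Perm.notMem_support.1 hz), Perm.one_apply]

lemma support_nonempty_of_ne_one (hκ : κ ≠ 1) : κ.support.Nonempty :=
  Finset.nonempty_iff_ne_empty.2 fun h => hκ (Perm.support_eq_empty_iff.1 h)

omit [DecidableEq α] in
lemma two_mul_add_three_le_card_of_odd (ho : Odd (orderOf κ)) (hκ : κ ≠ 1)
    (hE : IsElementaryTwo e E) (hc : ∀ f ∈ E, Commute f κ) : 2 * e + 3 ≤ Fintype.card α := by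
  classical
  obtain ⟨x, hx⟩ := support_nonempty_of_ne_one hκ
  refine (isOddSystem_sameCycle ho hE.mul_self hc fun _ _ _ _ => Finset.mem_univ _
    ).two_mul_add_three_le_card hE (actsFaithfullyOn_univ E) (x := x) ?_
  rwa [movedBy_sameCycle (Finset.subset_univ _)]

lemma pow_three_eq_one_and_card_support_of_odd (ho : Odd (orderOf κ)) (hκ : κ ≠ 1)
    (hE : IsElementaryTwo e E) (hc : ∀ f ∈ E, Commute f κ)
    (hcard : Fintype.card α ≤ 2 * e + 4) :
    κ ^ 3 = 1 ∧ (κ.support.card = 3 ∨ κ.support.card = 6 ∧ Fintype.card α = 2 * e + 4) := by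
  have hodd : IsOddSystem E Finset.univ κ.SameCycle :=
    isOddSystem_sameCycle ho hE.mul_self hc fun _ _ _ _ => Finset.mem_univ _
  have hmoved : movedBy Finset.univ κ.SameCycle = κ.support :=
    movedBy_sameCycle (Finset.subset_univ _)
  have hcases := fun x (hx : x ∈ κ.support) =>
    hodd.card_movedBy_of_card_le hE (actsFaithfullyOn_univ E) hcard (hmoved ▸ hx)
  rw [hmoved] at hcases
  obtain ⟨x, hx⟩ := support_nonempty_of_ne_one hκ
  have hcycle : (∀ z ∈ κ.support, κ.SameCycle x z) → κ ^ κ.support.card = 1 ∧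
      Odd κ.support.card := fun h => by
    have hκx : κ.IsCycle := ⟨x, Perm.mem_support.1 hx, fun y hy => h y (Perm.mem_support.2 hy)⟩
    exact ⟨hκx.orderOf ▸ pow_orderOf_eq_one κ, hκx.orderOf ▸ ho⟩
  rcases hcases x hx with ⟨-, hrel, hthree | ⟨hfour, -⟩⟩ | ⟨hsix, hcard', -, -⟩
  · exact ⟨hthree ▸ (hcycle hrel).1, Or.inl hthree⟩
  · exact absurd (hfour ▸ (hcycle hrel).2) (by decide)
  · refine ⟨pow_three_eq_one_of_card_support_cycleOf fun z hz => ?_, Or.inr ⟨hsix, hcard'⟩⟩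
    rw [← relClass_univ_sameCycle hz]
    rcases hcases z hz with ⟨-, -, h⟩ | ⟨-, -, h, -⟩ <;> omega

lemma card_support_eq_three_of_disjoint (hoκ : Odd (orderOf κ)) (hκ : κ ≠ 1)
    (hol : Odd (orderOf l)) (hl : l ≠ 1) (hE : IsElementaryTwo e E)
    (hcκ : ∀ f ∈ E, Commute f κ) (hcl : ∀ f ∈ E, Commute f l) (hd : κ.Disjoint l)
    (hcard : Fintype.card α ≤ 2 * e + 6) : κ.support.card = 3 := by
  have hodd : IsOddSystem E Finset.univ l.SameCycle :=
    isOddSystem_sameCycle hol hE.mul_self hcl fun _ _ _ _ => Finset.mem_univ _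
  obtain ⟨x, hx⟩ := support_nonempty_of_ne_one hl
  have hmoved : movedBy Finset.univ l.SameCycle = l.support :=
    movedBy_sameCycle (Finset.subset_univ _)
  have hxm : x ∈ movedBy Finset.univ l.SameCycle := hmoved ▸ hx
  set t := relTranslates E Finset.univ l.SameCycle x
  have hsupp : κ.support ⊆ Finset.univ \ t := fun y hy => Finset.mem_sdiff.2
    ⟨Finset.mem_univ y, fun hyt => Finset.disjoint_left.1 hd.disjoint_support hy
      (hmoved ▸ hodd.relTranslates_subset_movedBy (actsFaithfullyOn_univ E) hxm hyt)⟩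
  have hinv : ∀ y ∈ Finset.univ \ t, ∀ z, κ.SameCycle y z → z ∈ Finset.univ \ t := by
    rintro y hy z hyz
    by_contra hz
    have hκz : κ z = z := Perm.notMem_support.1 fun h => hz (hsupp h)
    exact hz (hyz.symm.eq_of_left hκz ▸ hy)
  obtain ⟨k, -, htrans, hE', -⟩ :
      ∃ k, _ ∧ t.card = _ ∧ IsElementaryTwo (e - k) _ ∧ _ :=
    hodd.exists_card_relTranslates hE (actsFaithfullyOn_univ E) (Finset.mem_univ x)
  have hmul := Nat.mul_le_mul_left (2 ^ k) (hodd.three_le_card_relClass_of_mem_movedBy hxm)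
  have hpow := two_mul_add_three_le k
  have hsdiff := Finset.card_sdiff_add_card_eq_card (Finset.subset_univ t)
  rw [Finset.card_univ] at hsdiff
  have hodd' : IsOddSystem (E ⊓ stabilizer (Perm α) x) (Finset.univ \ t) κ.SameCycle :=
    isOddSystem_sameCycle hoκ hE'.mul_self (fun f hf => hcκ f hf.1) hinv
  obtain ⟨y, hy⟩ := support_nonempty_of_ne_one hκ
  have := hodd'.card_movedBy_of_card_le hE'
    (hodd.actsFaithfullyOn_sdiff hE (actsFaithfullyOn_univ E) (Finset.mem_univ x)) (by omega)
    (movedBy_sameCycle hsupp ▸ hy)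
  rw [movedBy_sameCycle hsupp] at this
  omega

end OddOrder

section StringFamily

lemma eq_one_or_eq_of_mem_zpowers {G : Type*} [Group G] {x f : G} (hx : x * x = 1)
    (hf : f ∈ Subgroup.zpowers x) : f = 1 ∨ f = x := by
  obtain ⟨i, rfl⟩ := hf
  obtain ⟨k, rfl | rfl⟩ := i.even_or_odd'
  · left
    simp only [zpow_mul, zpow_two, hx, one_zpow]
  · right
    simp only [zpow_add_one, zpow_mul, zpow_two, hx, one_zpow, one_mul]

lemma exists_central_involution {G : Type*} [Group G] [Finite G] {x y : G} (hx : x * x = 1)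
    (hy : y * y = 1) (hy1 : y ≠ 1) (ho : Even (orderOf (x * y))) :
    ∃ z ∈ Subgroup.closure {x, y}, z * z = 1 ∧ z ≠ 1 ∧ z ≠ x ∧ Commute z x ∧ Commute z y := by
  obtain ⟨p, hp⟩ := ho
  have hpos : 0 < orderOf (x * y) := orderOf_pos _
  set z := (x * y) ^ p with hz
  have hzz : z * z = 1 := by rw [hz, ← pow_add, ← hp, pow_orderOf_eq_one]
  have hzx : Commute z x := by
    have hinv : SemiconjBy x (x * y) (x * y)⁻¹ := by
      rw [SemiconjBy, mul_inv_rev, inv_eq_of_mul_eq_one_left hx, inv_eq_of_mul_eq_one_left hy,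
        mul_assoc y x x, hx, ← mul_assoc, hx, one_mul, mul_one]
    have hconj := hinv.pow_right p
    rw [inv_pow, ← hz, inv_eq_of_mul_eq_one_left hzz] at hconj
    exact hconj.symm
  have hzy : Commute z y := by
    have hy' : y = x⁻¹ * (x * y) := (inv_mul_cancel_left x y).symm
    rw [hy']
    exact hzx.inv_right.mul_right ((Commute.refl (x * y)).pow_left p)
  have hmem : z ∈ Subgroup.closure {x, y} := Subgroup.pow_mem _ (Subgroup.mul_mem _
    (Subgroup.subset_closure (Set.mem_insert x {y}))
    (Subgroup.subset_closure (Set.mem_insert_of_mem x rfl))) p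
  refine ⟨z, hmem, hzz, fun h => ?_, fun h => ?_, hzx, hzy⟩
  · have := Nat.le_of_dvd (by omega) (orderOf_dvd_of_pow_eq_one h)
    omega
  · have hsq : (x * y) ^ 2 = 1 := by
      rw [(h ▸ hzy : Commute x y).mul_pow, pow_two, pow_two, hx, hy, one_mul]
    have := Nat.le_of_dvd two_pos (orderOf_dvd_of_pow_eq_one hsq)
    obtain rfl : p = 1 := by omega
    rw [hz, pow_one, mul_eq_left] at h
    exact hy1 h

lemma twoRankAtLeast_closure_pair {G : Type*} [Group G] [Finite G] {x y : G} (hx : x * x = 1)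
    (hx1 : x ≠ 1) (hy : y * y = 1) (hy1 : y ≠ 1) (ho : Even (orderOf (x * y))) :
    TwoRankAtLeast 2 (Subgroup.closure {x, y}) := by
  obtain ⟨z, hz, hzz, hz1, hzx, hcomm, -⟩ := exists_central_involution hx hy hy1 ho
  refine ⟨Subgroup.zpowers x ⊔ Subgroup.zpowers z, sup_le ?_ ?_,
    (isElementaryTwo_zpowers hx hx1).sup (isElementaryTwo_zpowers hzz hz1) ?_ ?_⟩
  · exact Subgroup.zpowers_le.2 (Subgroup.subset_closure (Set.mem_insert x {y}))
  · exact Subgroup.zpowers_le.2 hz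
  · rintro _ ⟨i, rfl⟩ _ ⟨k, rfl⟩
    exact hcomm.symm.zpow_zpow i k
  · refine Subgroup.disjoint_def.2 fun {f} hfx hfz => ?_
    rcases eq_one_or_eq_of_mem_zpowers hx hfx with rfl | rfl
    · rfl
    · exact (eq_one_or_eq_of_mem_zpowers hzz hfz).resolve_right hzx.symm

/-- Every index in `J` differs by at least two from every index in `K`, so that the members of a
string family indexed by `J` commute with those indexed by `K`. -/
def FarApart (J K : Set ℕ) : Prop :=
  ∀ i ∈ J, ∀ j ∈ K, i + 2 ≤ j ∨ j + 2 ≤ i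

lemma FarApart.symm {J K : Set ℕ} (h : FarApart J K) : FarApart K J :=
  fun i hi j hj => (h j hj i hi).symm

lemma FarApart.disjoint {J K : Set ℕ} (h : FarApart J K) : Disjoint J K :=
  Set.disjoint_left.2 fun i hi hi' => by
    have := h i hi i hi'
    omega

lemma FarApart.union_left {J K L : Set ℕ} (hJ : FarApart J L) (hK : FarApart K L) :
    FarApart (J ∪ K) L := by
  rintro i (hi | hi)
  · exact hJ i hi
  · exact hK i hi

lemma FarApart.mono_right {J K L : Set ℕ} (h : FarApart J L) (hKL : K ⊆ L) : FarApart J K :=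
  fun i hi j hj => h i hi j (hKL hj)

/-- Involutions `g 0, …, g (N - 1)` with commuting nonconsecutive members, such that disjoint
subfamilies generate subgroups with trivial intersection. The indices are natural numbers, and the
values of `g` from `N` on are irrelevant. -/
structure StringFamily {G : Type*} [Group G] (g : ℕ → G) (N : ℕ) : Prop where
  mul_self : ∀ i < N, g i * g i = 1
  ne_one : ∀ i < N, g i ≠ 1
  commute_of_lt : ∀ i j, i + 2 ≤ j → j < N → Commute (g i) (g j)
  disjoint_closure : ∀ J ⊆ Set.Iio N, ∀ K ⊆ Set.Iio N, Disjoint J K →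
    Disjoint (Subgroup.closure (g '' J)) (Subgroup.closure (g '' K))

lemma apply_mem_closure_image {G : Type*} [Group G] {g : ℕ → G} {J : Set ℕ} {i : ℕ} (hi : i ∈ J) :
    g i ∈ Subgroup.closure (g '' J) :=
  Subgroup.subset_closure ⟨i, hi, rfl⟩

lemma mul_mem_closure_pair {G : Type*} [Group G] (g : ℕ → G) (j : ℕ) :
    g j * g (j + 1) ∈ Subgroup.closure (g '' {j, j + 1}) :=
  Subgroup.mul_mem _ (apply_mem_closure_image (Set.mem_insert j _))
    (apply_mem_closure_image (Set.mem_insert_of_mem j rfl))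

lemma pair_subset_Iio {j N : ℕ} (hj : j + 1 < N) : ({j, j + 1} : Set ℕ) ⊆ Set.Iio N :=
  Set.pair_subset (Nat.lt_of_succ_lt hj) hj

namespace StringFamily

variable {G : Type*} [Group G] {g : ℕ → G} {N : ℕ}

lemma commute (h : StringFamily g N) {i j : ℕ} (hij : i + 2 ≤ j ∨ j + 2 ≤ i) (hi : i < N)
    (hj : j < N) : Commute (g i) (g j) := by
  rcases hij with hij | hij
  · exact h.commute_of_lt i j hij hj
  · exact (h.commute_of_lt j i hij hi).symm

lemma commute_of_farApart (h : StringFamily g N) {J K : Set ℕ} (hJ : J ⊆ Set.Iio N)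
    (hK : K ⊆ Set.Iio N) (hJK : FarApart J K) {x y : G} (hx : x ∈ Subgroup.closure (g '' J))
    (hy : y ∈ Subgroup.closure (g '' K)) : Commute x y := by
  refine commute_of_mem_closure ?_ hx hy
  rintro _ ⟨i, hi, rfl⟩ _ ⟨j, hj, rfl⟩
  exact h.commute (hJK i hi j hj) (hJ hi) (hK hj)

lemma reverse (h : StringFamily g N) : StringFamily (fun i => g (N - 1 - i)) N where
  mul_self i hi := h.mul_self _ (by omega)
  ne_one i hi := h.ne_one _ (by omega)
  commute_of_lt i j hij hj := h.commute (by omega) (by omega) (by omega)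
  disjoint_closure J hJ K hK hd := by
    have himage : ∀ J : Set ℕ,
        (fun i => g (N - 1 - i)) '' J = g '' ((fun i => N - 1 - i) '' J) :=
      fun J => (Set.image_image g _ J).symm
    have hsub : ∀ J ⊆ Set.Iio N, (fun i => N - 1 - i) '' J ⊆ Set.Iio N := by
      rintro J hJ _ ⟨i, hi, rfl⟩
      have := Set.mem_Iio.1 (hJ hi)
      exact Set.mem_Iio.2 (show N - 1 - i < N by omega)
    rw [himage, himage]
    refine h.disjoint_closure _ (hsub J hJ) _ (hsub K hK) (Set.disjoint_left.2 ?_)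
    rintro _ ⟨i, hi, rfl⟩ ⟨j, hj, hij⟩
    have := Set.mem_Iio.1 (hJ hi)
    have := Set.mem_Iio.1 (hK hj)
    obtain rfl : i = j := by dsimp only at hij; omega
    exact Set.disjoint_left.1 hd hi hj

lemma mul_ne_one (h : StringFamily g N) {j : ℕ} (hj : j + 1 < N) : g j * g (j + 1) ≠ 1 := by
  intro hmul
  have heq : g j = g (j + 1) := by
    rw [eq_inv_of_mul_eq_one_left hmul, inv_eq_of_mul_eq_one_left (h.mul_self _ hj)]
  have hd := h.disjoint_closure {j} (Set.singleton_subset_iff.2 (Nat.lt_of_succ_lt hj)) {j + 1}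
    (Set.singleton_subset_iff.2 hj) (Set.disjoint_singleton.2 j.lt_succ_self.ne)
  exact h.ne_one _ hj (Subgroup.disjoint_def.1 hd (heq ▸ apply_mem_closure_image rfl)
    (apply_mem_closure_image rfl))

lemma commute_mul (h : StringFamily g N) {W : Set ℕ} (hW : W ⊆ Set.Iio N) {j : ℕ} (hj : j + 1 < N)
    (hWj : FarApart W {j, j + 1}) {f : G} (hf : f ∈ Subgroup.closure (g '' W)) :
    Commute f (g j * g (j + 1)) :=
  h.commute_of_farApart hW (pair_subset_Iio hj) hWj hf (mul_mem_closure_pair g j)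

lemma semiconjBy_inv (h : StringFamily g N) {j : ℕ} (hj : j + 1 < N) :
    SemiconjBy (g j) (g j * g (j + 1)) (g j * g (j + 1))⁻¹ := by
  have hj' := h.mul_self j (by omega)
  rw [SemiconjBy, mul_inv_rev, inv_eq_of_mul_eq_one_left hj',
    inv_eq_of_mul_eq_one_left (h.mul_self _ hj), mul_assoc, hj', ← mul_assoc, hj', one_mul, mul_one]

variable [Finite G]

lemma twoRankAtLeast_singleton (h : StringFamily g N) {j : ℕ} (hj : j < N) :
    TwoRankAtLeast 1 (Subgroup.closure (g '' {j})) :=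
  ⟨_, Subgroup.zpowers_le.2 (apply_mem_closure_image rfl),
    isElementaryTwo_zpowers (h.mul_self j hj) (h.ne_one j hj)⟩

lemma twoRankAtLeast_pair (h : StringFamily g N) {j : ℕ} (hj : j + 1 < N)
    (ho : Even (orderOf (g j * g (j + 1)))) :
    TwoRankAtLeast 2 (Subgroup.closure (g '' {j, j + 1})) := by
  rw [Set.image_pair]
  exact twoRankAtLeast_closure_pair (h.mul_self _ (by omega)) (h.ne_one _ (by omega))
    (h.mul_self _ hj) (h.ne_one _ hj) ho

lemma twoRankAtLeast_union (h : StringFamily g N) {V W : Set ℕ} (hV : V ⊆ Set.Iio N)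
    (hW : W ⊆ Set.Iio N) (hVW : FarApart V W) {e d : ℕ}
    (hE : TwoRankAtLeast e (Subgroup.closure (g '' V)))
    (hF : TwoRankAtLeast d (Subgroup.closure (g '' W))) :
    TwoRankAtLeast (e + d) (Subgroup.closure (g '' (V ∪ W))) := by
  obtain ⟨E, hEV, hE⟩ := hE
  obtain ⟨F, hFW, hF⟩ := hF
  rw [Set.image_union, Subgroup.closure_union]
  exact ⟨E ⊔ F, sup_le_sup hEV hFW, hE.sup hF
    (fun f hf k hk => h.commute_of_farApart hV hW hVW (hEV hf) (hFW hk))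
    ((h.disjoint_closure V hV W hW hVW.disjoint).mono hEV hFW)⟩

lemma twoRankAtLeast_image (h : StringFamily g N) (φ : ℕ → ℕ) (p : ℕ)
    (hφ : ∀ s t, s < t → t < p → φ s + 2 ≤ φ t) (hN : ∀ t < p, φ t < N) :
    TwoRankAtLeast p (Subgroup.closure (g '' (φ '' Set.Iio p))) := by
  induction p with
  | zero => exact ⟨⊥, bot_le, isElementaryTwo_bot⟩
  | succ p ih =>
    have hIio : Set.Iio (p + 1) = Set.Iio p ∪ {p} := by
      ext t
      simp only [Set.mem_Iio, Set.mem_union, Set.mem_singleton_iff]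
      omega
    rw [hIio, Set.image_union, Set.image_singleton]
    refine h.twoRankAtLeast_union ?_ (Set.singleton_subset_iff.2 (hN p (by omega))) ?_
      (ih (fun s t hst ht => hφ s t hst (by omega)) fun t ht => hN t (by omega))
      (h.twoRankAtLeast_singleton (hN p (by omega)))
    · rintro _ ⟨t, ht, rfl⟩
      exact hN t (Nat.lt_succ_of_lt ht)
    · rintro _ ⟨t, ht, rfl⟩ _ rfl
      exact Or.inl (hφ t p ht p.lt_succ_self)

end StringFamily

end StringFamily

section ThreeCycles

open Equiv

variable {α : Type*} [Fintype α]

lemma TwoRankAtLeast.two_mul_le_card {e : ℕ} {K : Subgroup (Perm α)} (h : TwoRankAtLeast e K) :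
    2 * e ≤ Fintype.card α := by
  obtain ⟨E, -, hE⟩ := h
  exact hE.two_mul_le_card (actsFaithfullyOn_univ E)

namespace StringFamily

variable {g : ℕ → Perm α} {N e j : ℕ} {W : Set ℕ}

lemma two_mul_add_three_le_card (h : StringFamily g N) (hj : j + 1 < N) (hW : W ⊆ Set.Iio N)
    (hWj : FarApart W {j, j + 1}) (hE : TwoRankAtLeast e (Subgroup.closure (g '' W))) :
    2 * e + 3 ≤ Fintype.card α := by
  rcases Nat.even_or_odd (orderOf (g j * g (j + 1))) with ho | ho
  · have := (h.twoRankAtLeast_union hW (pair_subset_Iio hj) hWj hE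
      (h.twoRankAtLeast_pair hj ho)).two_mul_le_card
    omega
  · obtain ⟨E, hEW, hE⟩ := hE
    exact two_mul_add_three_le_card_of_odd ho (h.mul_ne_one hj) hE
      fun f hf => h.commute_mul hW hj hWj (hEW hf)

lemma isThreeCycle_of_card_le [DecidableEq α] (h : StringFamily g N) (hj : j + 1 < N)
    (hW : W ⊆ Set.Iio N) (hWj : FarApart W {j, j + 1})
    (hE : TwoRankAtLeast e (Subgroup.closure (g '' W))) (hα : Fintype.card α ≤ 2 * e + 3) :
    (g j * g (j + 1)).IsThreeCycle := by
  rcases Nat.even_or_odd (orderOf (g j * g (j + 1))) with ho | ho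
  · have := (h.twoRankAtLeast_union hW (pair_subset_Iio hj) hWj hE
      (h.twoRankAtLeast_pair hj ho)).two_mul_le_card
    omega
  · obtain ⟨E, hEW, hE⟩ := hE
    have := (pow_three_eq_one_and_card_support_of_odd ho (h.mul_ne_one hj) hE
      (fun f hf => h.commute_mul hW hj hWj (hEW hf)) (by omega)).2
    rw [← card_support_eq_three_iff]
    omega

lemma isThreeCycle_of_even [DecidableEq α] (h : StringFamily g N) (hα : Fintype.card α = N + 1)
    (hN : Even N) {l : ℕ} (hl : 2 * l + 1 < N) : (g (2 * l) * g (2 * l + 1)).IsThreeCycle := by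
  obtain ⟨p, rfl⟩ : ∃ p, N = 2 * p + 2 := by
    obtain ⟨k, hk⟩ := hN
    exact ⟨k - 1, by omega⟩
  have hrank := h.twoRankAtLeast_image (fun t => if t < l then 2 * t else 2 * t + 3) p
    (by intro s t _ _; split_ifs <;> omega) (by intro t _; split_ifs <;> omega)
  refine h.isThreeCycle_of_card_le hl ?_ ?_ hrank (by omega)
  · rintro _ ⟨t, ht, rfl⟩
    rw [Set.mem_Iio] at ht ⊢
    dsimp only
    split_ifs <;> omega
  · rintro _ ⟨t, -, rfl⟩ i (rfl | rfl) <;> dsimp only <;> split_ifs <;> omega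

end StringFamily

end ThreeCycles

section SixPoints

open Equiv

lemma zpow_eq_of_pow_three_eq_one {G : Type*} [Group G] {κ : G} (h : κ ^ 3 = 1) (i : ℤ) :
    κ ^ i = 1 ∨ κ ^ i = κ ∨ κ ^ i = κ⁻¹ := by
  have hinv : κ⁻¹ = κ ^ 2 := inv_eq_of_mul_eq_one_left (by rw [← pow_succ, h])
  have hmod : κ ^ i = κ ^ (i % 3) := zpow_eq_zpow_emod i (mod_cast h)
  obtain h3 | h3 | h3 : i % 3 = 0 ∨ i % 3 = 1 ∨ i % 3 = 2 := by omega
  · exact Or.inl (by rw [hmod, h3, zpow_zero])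
  · exact Or.inr (Or.inl (by rw [hmod, h3, zpow_one]))
  · exact Or.inr (Or.inr (by rw [hmod, h3, hinv, zpow_ofNat]))

lemma odd_orderOf_of_pow_three_eq_one {G : Type*} [Group G] {κ : G} (h : κ ^ 3 = 1) :
    Odd (orderOf κ) :=
  Odd.of_dvd_nat (by decide : Odd 3) (orderOf_dvd_of_pow_eq_one h)

lemma apply_zpow_apply_of_semiconjBy_inv {α : Type*} {κ s : Perm α} (h : SemiconjBy s κ κ⁻¹)
    (i : ℤ) (x : α) : s ((κ ^ i) x) = (κ ^ (-i)) (s x) := by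
  have hi := (h.zpow_right i).eq
  rw [inv_zpow, ← zpow_neg] at hi
  exact Perm.congr_fun hi x

variable {α : Type*} {κ l m s : Perm α} {w x : α}

lemma apply_eq_self_iff_of_sameCycle (hl : Commute l κ) (h : κ.SameCycle x w) :
    l w = w ↔ l x = x := by
  obtain ⟨i, rfl⟩ := h
  rw [apply_zpow_apply_of_commute hl, (κ ^ i).injective.eq_iff]

variable [Fintype α] [DecidableEq α]

lemma card_support_cycleOf_of_pow_three_eq_one (h : κ ^ 3 = 1) (hx : x ∈ κ.support) :
    (κ.cycleOf x).support.card = 3 := by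
  have hcycle := (Perm.isCycle_cycleOf_iff κ).2 (Perm.mem_support.1 hx)
  rw [← hcycle.orderOf]
  refine ((Nat.dvd_prime Nat.prime_three).1
    ((κ.orderOf_cycleOf_dvd_orderOf x).trans (orderOf_dvd_of_pow_eq_one h))).resolve_left ?_
  rw [orderOf_eq_one_iff]
  exact hcycle.ne_one

lemma sameCycle_or_sameCycle_of_card_support_eq_six (h3 : κ ^ 3 = 1) (h6 : κ.support.card = 6)
    {y : α} (hx : x ∈ κ.support) (hy : y ∈ κ.support) (hxy : ¬ κ.SameCycle x y)
    (hw : w ∈ κ.support) : κ.SameCycle x w ∨ κ.SameCycle y w := by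
  have hdisj : Disjoint (κ.cycleOf x).support (κ.cycleOf y).support :=
    Finset.disjoint_left.2 fun v hvx hvy =>
      hxy ((Perm.mem_support_cycleOf_iff.1 hvx).1.trans (Perm.mem_support_cycleOf_iff.1 hvy).1.symm)
  have hunion : (κ.cycleOf x).support ∪ (κ.cycleOf y).support = κ.support := by
    refine Finset.eq_of_subset_of_card_le
      (Finset.union_subset (Perm.support_cycleOf_le κ x) (Perm.support_cycleOf_le κ y)) ?_
    rw [Finset.card_union_of_disjoint hdisj, card_support_cycleOf_of_pow_three_eq_one h3 hx,
      card_support_cycleOf_of_pow_three_eq_one h3 hy, h6]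
  rw [← hunion, Finset.mem_union] at hw
  exact hw.imp (fun h => (Perm.mem_support_cycleOf_iff.1 h).1)
    fun h => (Perm.mem_support_cycleOf_iff.1 h).1

lemma apply_eq_self_of_mem_support_of_isThreeCycle (hκ : κ.IsThreeCycle) (hs : s * s = 1)
    (hc : Commute s κ) (hx : x ∈ κ.support) : s x = x :=
  apply_eq_self_of_sameCycle (κ := κ) (by rw [hκ.orderOf]; decide) hs hc
    (hκ.isCycle.sameCycle (Perm.mem_support.1 hx)
      (Perm.mem_support.1 ((Perm.mem_support_iff_of_commute hc x).2 hx)))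

/-- `κ` and `l` are commuting permutations of order three moving six points each, the first of
which is inverted and the second centralized by `s`. -/
structure IsInvertedPair (s κ l : Perm α) : Prop where
  pow_three_left : κ ^ 3 = 1
  pow_three_right : l ^ 3 = 1
  commute : Commute l κ
  semiconjBy : SemiconjBy s κ κ⁻¹
  commute_right : Commute s l
  card_support_left : κ.support.card = 6
  card_support_right : l.support.card = 6

namespace IsInvertedPair

lemma sameCycle_apply (h : IsInvertedPair s κ l) (hx : x ∈ κ.support) : κ.SameCycle x (l x) := by
  by_contra hn
  have hlx := (Perm.mem_support_iff_of_commute h.commute x).2 hx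
  rcases sameCycle_or_sameCycle_of_card_support_eq_six h.pow_three_left h.card_support_left hx hlx
    hn ((Perm.mem_support_iff_of_commute h.commute _).2 hlx) with ⟨i, hi⟩ | ⟨i, hi⟩
  · refine hn ⟨i + i, ?_⟩
    have hl : l (l (l x)) = x := Perm.congr_fun h.pow_three_right x
    rw [zpow_add, Perm.mul_apply, hi, ← apply_zpow_apply_of_commute h.commute,
      ← apply_zpow_apply_of_commute h.commute, hi, hl]
  · rw [← apply_zpow_apply_of_commute h.commute] at hi
    exact hn ⟨i, l.injective hi⟩

lemma apply_eq_or_eq_inv_apply (h : IsInvertedPair s κ l) (hx : x ∈ κ.support) (hxl : l x ≠ x) :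
    l x = κ x ∨ l x = κ⁻¹ x := by
  obtain ⟨i, hi⟩ := h.sameCycle_apply hx
  rcases zpow_eq_of_pow_three_eq_one h.pow_three_left i with h1 | hκ | hκ
  · rw [h1] at hi
    exact absurd hi.symm hxl
  · exact Or.inl (by rw [← hi, hκ])
  · exact Or.inr (by rw [← hi, hκ])

lemma apply_mem_support (h : IsInvertedPair s κ l) (hx : x ∈ κ.support) : s x ∈ κ.support := by
  rw [Perm.mem_support] at hx ⊢
  intro hsx
  have hκ := Perm.congr_fun h.semiconjBy.eq x
  rw [Perm.mul_apply, Perm.mul_apply, Perm.inv_eq_iff_eq.2 hsx.symm] at hκ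
  exact hx (s.injective hκ)

lemma not_sameCycle_apply (h : IsInvertedPair s κ l) (hx : x ∈ κ.support) (hxl : l x ≠ x) :
    ¬ κ.SameCycle x (s x) := by
  rintro ⟨t, ht⟩
  obtain ⟨i, hi⟩ := h.sameCycle_apply hx
  have hsl : s (l x) = l (s x) := Perm.congr_fun h.commute_right.eq x
  rw [← hi, apply_zpow_apply_of_semiconjBy_inv h.semiconjBy, ← ht,
    apply_zpow_apply_of_commute h.commute, ← hi] at hsl
  simp only [← Perm.mul_apply, ← zpow_add] at hsl
  have hfix : (κ ^ (2 * i)) x = x := by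
    refine (κ ^ (t - i)).injective ?_
    rw [← Perm.mul_apply, ← zpow_add]
    convert hsl.symm using 3 <;> ring
  exact hxl (hi.symm.trans (zpow_apply_eq_self_of_two_mul
    (odd_orderOf_of_pow_three_eq_one h.pow_three_left) hfix))

lemma sameCycle_or_sameCycle_apply (h : IsInvertedPair s κ l) (hx : x ∈ κ.support)
    (hxl : l x ≠ x) (hw : w ∈ κ.support) : κ.SameCycle x w ∨ κ.SameCycle (s x) w :=
  sameCycle_or_sameCycle_of_card_support_eq_six h.pow_three_left h.card_support_left hx
    (h.apply_mem_support hx) (h.not_sameCycle_apply hx hxl) hw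

lemma support_eq (h : IsInvertedPair s κ l) (hd : ¬ κ.Disjoint l) : l.support = κ.support := by
  simp only [Perm.Disjoint, not_forall, not_or] at hd
  obtain ⟨x, hxκ, hxl⟩ := hd
  have hx := Perm.mem_support.2 hxκ
  have hsl : l (s x) = s (l x) := (Perm.congr_fun h.commute_right.eq x).symm
  refine (Finset.eq_of_subset_of_card_le (fun w hw => Perm.mem_support.2 ?_)
    (h.card_support_right.trans h.card_support_left.symm).le).symm
  rcases h.sameCycle_or_sameCycle_apply hx hxl hw with hxw | hsw
  · rwa [Ne, apply_eq_self_iff_of_sameCycle h.commute hxw]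
  · rwa [Ne, apply_eq_self_iff_of_sameCycle h.commute hsw, hsl, s.injective.eq_iff]

lemma inv_right (h : IsInvertedPair s κ l) : IsInvertedPair s κ l⁻¹ where
  pow_three_left := h.pow_three_left
  pow_three_right := by rw [inv_pow, h.pow_three_right, inv_one]
  commute := h.commute.inv_left
  semiconjBy := h.semiconjBy
  commute_right := h.commute_right.inv_right
  card_support_left := h.card_support_left
  card_support_right := by rw [Perm.support_inv, h.card_support_right]

lemma eq_of_apply_eq (hl : IsInvertedPair s κ l) (hm : IsInvertedPair s κ m)
    (hdl : ¬ κ.Disjoint l) (hdm : ¬ κ.Disjoint m) (hx : x ∈ κ.support) (hlm : l x = m x) :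
    l = m := by
  have hlx : l x ≠ x := Perm.mem_support.1 ((hl.support_eq hdl).symm ▸ hx)
  have hsl : s (l x) = l (s x) := Perm.congr_fun hl.commute_right.eq x
  have hsm : s (m x) = m (s x) := Perm.congr_fun hm.commute_right.eq x
  ext1 w
  by_cases hw : w ∈ κ.support
  · rcases hl.sameCycle_or_sameCycle_apply hx hlx hw with ⟨t, rfl⟩ | ⟨t, rfl⟩
    · rw [apply_zpow_apply_of_commute hl.commute, apply_zpow_apply_of_commute hm.commute, hlm]
    · rw [apply_zpow_apply_of_commute hl.commute, apply_zpow_apply_of_commute hm.commute, ← hsl,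
        ← hsm, hlm]
  · rw [Perm.notMem_support.1 fun h => hw (hl.support_eq hdl ▸ h),
      Perm.notMem_support.1 fun h => hw (hm.support_eq hdm ▸ h)]

lemma eq_or_eq_inv (hl : IsInvertedPair s κ l) (hm : IsInvertedPair s κ m)
    (hdl : ¬ κ.Disjoint l) (hdm : ¬ κ.Disjoint m) : l = m ∨ l = m⁻¹ := by
  obtain ⟨x, hx⟩ : κ.support.Nonempty :=
    Finset.card_pos.1 (by rw [hl.card_support_left]; exact Nat.succ_pos 5)
  have hlx := hl.apply_eq_or_eq_inv_apply hx
    (Perm.mem_support.1 ((hl.support_eq hdl).symm ▸ hx))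
  have hmx := hm.apply_eq_or_eq_inv_apply hx
    (Perm.mem_support.1 ((hm.support_eq hdm).symm ▸ hx))
  have hinv : m⁻¹ x = κ x ∧ m x = κ⁻¹ x ∨ m⁻¹ x = κ⁻¹ x ∧ m x = κ x := by
    rcases hmx with hmx | hmx
    · refine Or.inr ⟨?_, hmx⟩
      have hκ := apply_zpow_apply_of_commute hm.commute (-1) x
      rw [zpow_neg_one] at hκ
      rw [Perm.inv_eq_iff_eq, hκ, hmx, ← Perm.mul_apply, inv_mul_cancel, Perm.one_apply]
    · refine Or.inl ⟨?_, hmx⟩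
      have hκ := apply_zpow_apply_of_commute hm.commute 1 x
      rw [zpow_one] at hκ
      rw [Perm.inv_eq_iff_eq, hκ, hmx, ← Perm.mul_apply, mul_inv_cancel, Perm.one_apply]
  have heq : l x = m x ∨ l x = m⁻¹ x := by
    rcases hlx with h | h <;> rcases hinv with ⟨h', h''⟩ | ⟨h', h''⟩ <;>
      simp only [h, h', h'', true_or, or_true]
  exact heq.imp (hl.eq_of_apply_eq hm hdl hdm hx)
    (hl.eq_of_apply_eq hm.inv_right hdl (fun h => hdm (by simpa using h.inv_right)) hx)

end IsInvertedPair

end SixPoints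

section EvenDegree

open Equiv

namespace StringFamily

variable {α : Type*} [Fintype α] {g : ℕ → Perm α} {N e j k : ℕ} {W : Set ℕ}

lemma odd_orderOf (h : StringFamily g N) (hj : j + 1 < N) (hk : k + 1 < N)
    (hjk : FarApart {j, j + 1} {k, k + 1}) (hW : W ⊆ Set.Iio N) (hWj : FarApart W {j, j + 1})
    (hWk : FarApart W {k, k + 1}) (hE : TwoRankAtLeast e (Subgroup.closure (g '' W)))
    (hα : Fintype.card α ≤ 2 * e + 6) : Odd (orderOf (g j * g (j + 1))) := by
  by_contra ho
  have hrank := h.twoRankAtLeast_union hW (pair_subset_Iio hj) hWj hE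
    (h.twoRankAtLeast_pair hj (Nat.not_odd_iff_even.1 ho))
  have := h.two_mul_add_three_le_card hk (Set.union_subset hW (pair_subset_Iio hj))
    (hWk.union_left hjk) hrank
  omega

variable [DecidableEq α]

lemma pow_three_eq_one_and_card_support (h : StringFamily g N) (hj : j + 1 < N) (hk : k + 1 < N)
    (hjk : FarApart {j, j + 1} {k, k + 1}) (hW : W ⊆ Set.Iio N) (hWj : FarApart W {j, j + 1})
    (hWk : FarApart W {k, k + 1}) (hE : TwoRankAtLeast e (Subgroup.closure (g '' W)))
    (hα : Fintype.card α ≤ 2 * e + 6) : (g j * g (j + 1)) ^ 3 = 1 ∧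
      ((g j * g (j + 1)).support.card = 3 ∨ (g j * g (j + 1)).support.card = 6) := by
  have hk' : ({k} : Set ℕ) ⊆ Set.Iio N := Set.singleton_subset_iff.2 (Nat.lt_of_succ_lt hk)
  have hsub : ({k} : Set ℕ) ⊆ {k, k + 1} := Set.singleton_subset_iff.2 (Set.mem_insert k _)
  obtain ⟨E, hEW, hE'⟩ := h.twoRankAtLeast_union hW hk' (hWk.mono_right hsub) hE
    (h.twoRankAtLeast_singleton (Nat.lt_of_succ_lt hk))
  have hfar := hWj.union_left (hjk.mono_right hsub).symm
  have := pow_three_eq_one_and_card_support_of_odd (h.odd_orderOf hj hk hjk hW hWj hWk hE hα)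
    (h.mul_ne_one hj) hE'
    (fun f hf => h.commute_mul (Set.union_subset hW hk') hj hfar (hEW hf)) (by omega)
  exact ⟨this.1, this.2.imp_right And.left⟩

lemma disjoint_of_isThreeCycle (h : StringFamily g N) (hj : j + 1 < N) (hk : k + 1 < N)
    (hjk : FarApart {j, j + 1} {k, k + 1}) (h3 : (g j * g (j + 1)).IsThreeCycle) :
    (g j * g (j + 1)).Disjoint (g k * g (k + 1)) := by
  have hfix : ∀ i ∈ ({k, k + 1} : Set ℕ), ∀ x ∈ (g j * g (j + 1)).support, g i x = x :=
    fun i hi x hx => apply_eq_self_of_mem_support_of_isThreeCycle h3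
      (h.mul_self i (pair_subset_Iio hk hi))
      (h.commute_mul (pair_subset_Iio hk) hj hjk.symm (apply_mem_closure_image hi)) hx
  intro x
  by_cases hx : x ∈ (g j * g (j + 1)).support
  · right
    rw [Perm.mul_apply, hfix _ (Set.mem_insert_of_mem k rfl) x hx, hfix _ (Set.mem_insert k _) x hx]
  · exact Or.inl (Perm.notMem_support.1 hx)

lemma dichotomy_of_farApart (h : StringFamily g N) (hj : j + 1 < N) (hk : k + 1 < N)
    (hjk : FarApart {j, j + 1} {k, k + 1}) (hW : W ⊆ Set.Iio N) (hWj : FarApart W {j, j + 1})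
    (hWk : FarApart W {k, k + 1}) (hE : TwoRankAtLeast e (Subgroup.closure (g '' W)))
    (hα : Fintype.card α ≤ 2 * e + 6) :
    ((g j * g (j + 1)).IsThreeCycle ∧ (g k * g (k + 1)).IsThreeCycle ∧
        (g j * g (j + 1)).Disjoint (g k * g (k + 1))) ∨
      (IsInvertedPair (g j) (g j * g (j + 1)) (g k * g (k + 1)) ∧
        ¬ (g j * g (j + 1)).Disjoint (g k * g (k + 1))) := by
  by_cases hd : (g j * g (j + 1)).Disjoint (g k * g (k + 1))
  · obtain ⟨E, hEW, hE'⟩ := hE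
    have hoj := h.odd_orderOf hj hk hjk hW hWj hWk ⟨E, hEW, hE'⟩ hα
    have hok := h.odd_orderOf hk hj hjk.symm hW hWk hWj ⟨E, hEW, hE'⟩ hα
    have hcj := fun f hf => h.commute_mul hW hj hWj (hEW (x := f) hf)
    have hck := fun f hf => h.commute_mul hW hk hWk (hEW (x := f) hf)
    simp only [← card_support_eq_three_iff]
    exact Or.inl ⟨card_support_eq_three_of_disjoint hoj (h.mul_ne_one hj) hok (h.mul_ne_one hk)
      hE' hcj hck hd hα, card_support_eq_three_of_disjoint hok (h.mul_ne_one hk) hoj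
      (h.mul_ne_one hj) hE' hck hcj hd.symm hα, hd⟩
  · obtain ⟨hj3, hjcard⟩ := h.pow_three_eq_one_and_card_support hj hk hjk hW hWj hWk hE hα
    obtain ⟨hk3, hkcard⟩ := h.pow_three_eq_one_and_card_support hk hj hjk.symm hW hWk hWj hE hα
    have hj6 := hjcard.resolve_left fun h3 =>
      hd (h.disjoint_of_isThreeCycle hj hk hjk (card_support_eq_three_iff.1 h3))
    have hk6 := hkcard.resolve_left fun h3 =>
      hd (h.disjoint_of_isThreeCycle hk hj hjk.symm (card_support_eq_three_iff.1 h3)).symm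
    refine Or.inr ⟨⟨hj3, hk3, ?_, h.semiconjBy_inv hj, ?_, hj6, hk6⟩, hd⟩
    · exact h.commute_mul (pair_subset_Iio hk) hj hjk.symm (mul_mem_closure_pair g k)
    · exact h.commute_mul (pair_subset_Iio hj) hk hjk
        (apply_mem_closure_image (Set.mem_insert j _))

lemma dichotomy_of_odd (h : StringFamily g N) (hα : Fintype.card α = N + 1) (hN : Odd N) {l : ℕ}
    (hl : 2 * l + 4 < N) :
    ((g 0 * g 1).IsThreeCycle ∧ (g (2 * l + 3) * g (2 * l + 4)).IsThreeCycle ∧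
        (g 0 * g 1).Disjoint (g (2 * l + 3) * g (2 * l + 4))) ∨
      (IsInvertedPair (g 0) (g 0 * g 1) (g (2 * l + 3) * g (2 * l + 4)) ∧
        ¬ (g 0 * g 1).Disjoint (g (2 * l + 3) * g (2 * l + 4))) := by
  obtain ⟨p, rfl⟩ : ∃ p, N = 2 * p + 5 := by
    obtain ⟨k, hk⟩ := hN
    exact ⟨k - 2, by omega⟩
  have hrank := h.twoRankAtLeast_image (fun t => if t < l then 2 * t + 3 else 2 * t + 6) p
    (by intro s t _ _; split_ifs <;> omega) (by intro t _; split_ifs <;> omega)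
  refine h.dichotomy_of_farApart (j := 0) (k := 2 * l + 3) (by omega) hl ?_ ?_ ?_ ?_ hrank
    (by omega)
  · rintro i (rfl | rfl) i' (rfl | rfl) <;> omega
  · rintro _ ⟨t, ht, rfl⟩
    rw [Set.mem_Iio] at ht ⊢
    dsimp only
    split_ifs <;> omega
  · rintro _ ⟨t, -, rfl⟩ i (rfl | rfl) <;> dsimp only <;> split_ifs <;> omega
  · rintro _ ⟨t, -, rfl⟩ i (rfl | rfl) <;> dsimp only <;> split_ifs <;> omega

lemma isThreeCycle_of_odd (h : StringFamily g N) (hα : Fintype.card α = N + 1)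
    (hN : Odd N) (hN7 : 7 ≤ N) {l : ℕ} (hl : 2 * l + 4 < N) :
    (g 0 * g 1).IsThreeCycle ∧ (g (2 * l + 3) * g (2 * l + 4)).IsThreeCycle ∧
      (g 0 * g 1).Disjoint (g (2 * l + 3) * g (2 * l + 4)) := by
  refine (h.dichotomy_of_odd hα hN hl).resolve_right fun h6 => ?_
  have hsix : ¬ (g 0 * g 1).IsThreeCycle := fun h3 => by
    have := h6.1.card_support_left.symm.trans h3.card_support
    omega
  have hoverlap := fun l (hl : 2 * l + 4 < N) =>
    (h.dichotomy_of_odd hα hN hl).resolve_left fun h3 => hsix h3.1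
  obtain ⟨h₃, hd₃⟩ := hoverlap 0 (by omega)
  obtain ⟨h₅, hd₅⟩ := hoverlap 1 (by omega)
  have hmem : g 3 * g 4 ∈ Subgroup.closure (g '' {5, 6}) := by
    rcases h₃.eq_or_eq_inv h₅ hd₃ hd₅ with heq | heq
    · exact heq ▸ mul_mem_closure_pair g 5
    · exact heq ▸ Subgroup.inv_mem _ (mul_mem_closure_pair g 5)
  have hd := h.disjoint_closure {3, 4} (pair_subset_Iio (j := 3) (by omega)) {5, 6}
    (pair_subset_Iio (j := 5) (by omega)) (by simp)
  exact h.mul_ne_one (j := 3) (by omega)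
    (Subgroup.disjoint_def.1 hd (mul_mem_closure_pair g 3) hmem)

end StringFamily

end EvenDegree

section ThreeCycleChains

open Equiv

variable {α : Type*} [Fintype α] [DecidableEq α]

/-- The 3-cycles `t 0, …, t (q - 1)` have supports that meet in at most one point if they are
consecutive, and are disjoint otherwise. -/
structure IsThreeCycleChain (t : ℕ → Perm α) (q : ℕ) : Prop where
  isThreeCycle : ∀ l < q, (t l).IsThreeCycle
  disjoint : ∀ l k, l + 2 ≤ k → k < q → Disjoint (t l).support (t k).support
  card_inter_le_one : ∀ l, l + 1 < q → ((t l).support ∩ (t (l + 1)).support).card ≤ 1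

/-- The union of the supports of `t 0, …, t (q - 1)`. -/
def supportUnion (t : ℕ → Perm α) (q : ℕ) : Finset α :=
  (Finset.range q).biUnion fun l => (t l).support

lemma supportUnion_succ (t : ℕ → Perm α) (q : ℕ) :
    supportUnion t (q + 1) = (t q).support ∪ supportUnion t q := by
  rw [supportUnion, Finset.range_add_one, Finset.biUnion_insert, supportUnion]

lemma supportUnion_subset_iff {t : ℕ → Perm α} {q : ℕ} {U : Finset α} :
    supportUnion t q ⊆ U ↔ ∀ l < q, (t l).support ⊆ U := by
  simp only [supportUnion, Finset.biUnion_subset, Finset.mem_range]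

namespace IsThreeCycleChain

variable {t : ℕ → Perm α} {p q : ℕ}

lemma support_inter_supportUnion_subset (h : IsThreeCycleChain t q) (hp : p + 1 < q) :
    (t (p + 1)).support ∩ supportUnion t (p + 1) ⊆ (t p).support ∩ (t (p + 1)).support := by
  intro x hx
  obtain ⟨hxp, hxU⟩ := Finset.mem_inter.1 hx
  obtain ⟨l, hl, hxl⟩ := Finset.mem_biUnion.1 hxU
  rw [Finset.mem_range] at hl
  rcases (Nat.le_of_lt_succ hl).lt_or_eq with hlp | rfl
  · exact absurd hxp (Finset.disjoint_left.1 (h.disjoint l (p + 1) (by omega) hp) hxl)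
  · exact Finset.mem_inter.2 ⟨hxl, hxp⟩

lemma card_supportUnion_add_three_le (h : IsThreeCycleChain t q) (hp : p + 1 < q) :
    (supportUnion t (p + 1)).card + 3 ≤
      (supportUnion t (p + 1 + 1)).card + ((t p).support ∩ (t (p + 1)).support).card := by
  have hU := Finset.card_union_add_card_inter (t (p + 1)).support (supportUnion t (p + 1))
  have hle := Finset.card_le_card (h.support_inter_supportUnion_subset hp)
  rw [(h.isThreeCycle (p + 1) hp).card_support, ← supportUnion_succ] at hU
  omega

lemma two_mul_add_three_le_card_supportUnion (h : IsThreeCycleChain t q) (hp : p < q) :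
    2 * p + 3 ≤ (supportUnion t (p + 1)).card := by
  induction p with
  | zero =>
    rw [supportUnion_succ]
    exact (h.isThreeCycle 0 hp).card_support.symm.le.trans
      (Finset.card_le_card Finset.subset_union_left)
  | succ p ih =>
    have := ih (Nat.lt_of_succ_lt hp)
    have := h.card_supportUnion_add_three_le hp
    have := h.card_inter_le_one p hp
    omega

lemma two_mul_add_four_le_card_supportUnion (h : IsThreeCycleChain t q) (hp : p < q) {i : ℕ}
    (hi : i < p) (hd : Disjoint (t i).support (t (i + 1)).support) :
    2 * p + 4 ≤ (supportUnion t (p + 1)).card := by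
  induction p with
  | zero => exact absurd hi (Nat.not_lt_zero i)
  | succ p ih =>
    have hstep := h.card_supportUnion_add_three_le hp
    rcases (Nat.le_of_lt_succ hi).lt_or_eq with hip | rfl
    · have := ih (Nat.lt_of_succ_lt hp) hip
      have := h.card_inter_le_one p hp
      omega
    · rw [Finset.disjoint_iff_inter_eq_empty.1 hd, Finset.card_empty] at hstep
      have := h.two_mul_add_three_le_card_supportUnion (Nat.lt_of_succ_lt hp)
      omega

lemma tail (h : IsThreeCycleChain t (q + 1)) : IsThreeCycleChain (fun l => t (l + 1)) q where
  isThreeCycle l hl := h.isThreeCycle (l + 1) (by omega)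
  disjoint l k hlk hk := h.disjoint (l + 1) (k + 1) (by omega) (by omega)
  card_inter_le_one l hl := h.card_inter_le_one (l + 1) (by omega)

lemma not_disjoint_of_card_le (h : IsThreeCycleChain t q) {U : Finset α}
    (hU : ∀ l < q, (t l).support ⊆ U) (hc : U.card ≤ 2 * q + 1) {i : ℕ} (hi : i + 1 < q) :
    ¬ Disjoint (t i).support (t (i + 1)).support := fun hd => by
  obtain ⟨p, rfl⟩ := Nat.exists_eq_add_of_lt (Nat.zero_lt_of_lt hi)
  rw [Nat.zero_add] at *
  have := h.two_mul_add_four_le_card_supportUnion (Nat.lt_succ_self p) (by omega) hd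
  have := Finset.card_le_card (supportUnion_subset_iff.2 hU)
  omega

end IsThreeCycleChain

end ThreeCycleChains

section Blocks

open Equiv MulAction Pointwise

variable {α : Type*} [Fintype α] [DecidableEq α]

lemma exists_mem_apply_mem_of_isThreeCycle {t : Perm α} (ht : t.IsThreeCycle) {B : Set α}
    (hB : B.Nontrivial) {x : α} (hx : x ∈ B) (hxt : x ∈ t.support) : ∃ y ∈ B, t y ∈ B := by
  obtain ⟨z, hz, hzx⟩ := hB.exists_ne x
  by_cases hzt : t z = z
  · exact ⟨z, hz, hzt.symm ▸ hz⟩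
  obtain ⟨i, rfl⟩ := ht.isCycle.sameCycle (Perm.mem_support.1 hxt) hzt
  have ht3 : t ^ 3 = 1 := by rw [← ht.orderOf, pow_orderOf_eq_one]
  rcases zpow_eq_of_pow_three_eq_one ht3 i with h | h | h <;> rw [h] at hz hzx
  · exact absurd rfl hzx
  · exact ⟨x, hx, hz⟩
  · refine ⟨t⁻¹ x, hz, ?_⟩
    rwa [← Perm.mul_apply, mul_inv_cancel]

lemma support_subset_of_isBlock {H : Subgroup (Perm α)} {B : Set α} (hB : IsBlock H B)
    (hB2 : B.Nontrivial) {t : Perm α} (ht : t.IsThreeCycle) (htH : t ∈ H) {x : α} (hx : x ∈ B)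
    (hxt : x ∈ t.support) : (t.support : Set α) ⊆ B := by
  obtain ⟨y, hy, htyB⟩ := exists_mem_apply_mem_of_isThreeCycle ht hB2 hx hxt
  have hmap : (⟨t, htH⟩ : H) • B = B := isBlock_iff_smul_eq_of_nonempty.1 hB
    ⟨t y, Set.smul_mem_smul_set (a := (⟨t, htH⟩ : H)) hy, htyB⟩
  intro z hz
  obtain ⟨i, rfl⟩ := ht.isCycle.sameCycle (Perm.mem_support.1 hxt) (Perm.mem_support.1 hz)
  have hi : (⟨t, htH⟩ : H) ^ i ∈ stabilizer H B := Subgroup.zpow_mem _ hmap i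
  rw [← mem_stabilizer_iff.1 hi]
  exact Set.smul_mem_smul_set (a := (⟨t, htH⟩ : H) ^ i) hx

lemma IsThreeCycleChain.alternatingGroup_le {t : ℕ → Perm α} {q : ℕ} (h : IsThreeCycleChain t q)
    (hq : 1 ≤ q) (hmeet : ∀ i, i + 1 < q → ¬ Disjoint (t i).support (t (i + 1)).support)
    (hα : Fintype.card α < 2 * (2 * q + 1)) {H : Subgroup (Perm α)} (hH : IsPretransitive H α)
    (hmem : ∀ l < q, t l ∈ H) : alternatingGroup α ≤ H := by
  obtain ⟨x₀, hx₀⟩ : (t 0).support.Nonempty := by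
    rw [← Finset.card_pos, (h.isThreeCycle 0 hq).card_support]
    exact Nat.succ_pos 2
  refine Perm.alternatingGroup_le_of_isPreprimitive_of_isThreeCycle_mem
    (IsPreprimitive.of_isTrivialBlock_base x₀ fun {B} hxB hB => ?_) (h.isThreeCycle 0 hq)
    (hmem 0 hq)
  refine B.subsingleton_or_nontrivial.imp_right fun hB2 => hB.eq_univ_of_card_lt ?_
  have hsub : ∀ l < q, ((t l).support : Set α) ⊆ B := by
    intro l
    induction l with
    | zero =>
      exact fun hl => support_subset_of_isBlock hB hB2 (h.isThreeCycle 0 hl) (hmem 0 hl) hxB hx₀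
    | succ l ih =>
      intro hl
      obtain ⟨x, hx, hx'⟩ := Finset.not_disjoint_iff.1 (hmeet l hl)
      exact support_subset_of_isBlock hB hB2 (h.isThreeCycle _ hl) (hmem _ hl)
        (ih (Nat.lt_of_succ_lt hl) (Finset.mem_coe.2 hx)) hx'
  have hU : (supportUnion t q : Set α) ⊆ B := by
    simpa only [supportUnion, Finset.coe_biUnion, Finset.coe_range, Set.iUnion₂_subset_iff,
      Set.mem_Iio]
      using hsub
  obtain ⟨p, rfl⟩ := Nat.exists_eq_add_of_le' hq
  have hcard := h.two_mul_add_three_le_card_supportUnion (Nat.lt_succ_self p)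
  have hle := Set.ncard_le_ncard hU
  rw [Set.ncard_coe_finset] at hle
  rw [Nat.card_eq_fintype_card]
  omega

end Blocks

section Chains

open Equiv MulAction

namespace StringFamily

variable {α : Type*} [Fintype α] [DecidableEq α] {g : ℕ → Perm α} {N : ℕ}

lemma card_support_inter_le_one (h : StringFamily g N) {i : ℕ} (hi : i + 3 < N)
    (h3 : (g i * g (i + 1)).IsThreeCycle) (h3' : (g (i + 2) * g (i + 3)).IsThreeCycle) :
    ((g i * g (i + 1)).support ∩ (g (i + 2) * g (i + 3)).support).card ≤ 1 := by
  have hc : Commute (g i) (g (i + 2) * g (i + 3)) :=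
    (h.commute_of_lt i (i + 2) le_rfl (by omega)).mul_right
      (h.commute_of_lt i (i + 3) (by omega) hi)
  have hfix : ∀ x ∈ (g (i + 2) * g (i + 3)).support, g i x = x := fun x =>
    apply_eq_self_of_mem_support_of_isThreeCycle h3' (h.mul_self i (by omega)) hc
  rw [Finset.card_le_one]
  intro x hx y hy
  rw [Finset.mem_inter] at hx hy
  obtain ⟨k, rfl⟩ := h3.isCycle.sameCycle (Perm.mem_support.1 hx.1) (Perm.mem_support.1 hy.1)
  have hk := apply_zpow_apply_of_semiconjBy_inv (h.semiconjBy_inv (j := i) (by omega)) k x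
  rw [hfix _ hx.2, hfix _ hy.2] at hk
  refine (zpow_apply_eq_self_of_two_mul (by rw [h3.orderOf]; decide) ?_).symm
  rw [two_mul, zpow_add, Perm.mul_apply, hk, ← Perm.mul_apply, ← zpow_add, add_neg_cancel,
    zpow_zero, Perm.one_apply]

lemma isThreeCycleChain (h : StringFamily g N) {c q : ℕ} (hcq : c + 2 * q ≤ N)
    (h3 : ∀ l < q, (g (2 * l + c) * g (2 * l + c + 1)).IsThreeCycle) :
    IsThreeCycleChain (fun l => g (2 * l + c) * g (2 * l + c + 1)) q where
  isThreeCycle := h3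
  disjoint l k hlk hk := by
    refine Perm.disjoint_iff_disjoint_support.1
      (h.disjoint_of_isThreeCycle (by omega) (by omega) ?_ (h3 l (by omega)))
    rintro i (rfl | rfl) j (rfl | rfl) <;> omega
  card_inter_le_one l hl := by
    have h3' := h3 (l + 1) hl
    rw [show 2 * (l + 1) + c = 2 * l + c + 2 by ring] at h3' ⊢
    exact h.card_support_inter_le_one (by omega) (h3 l (by omega)) h3'

lemma alternatingGroup_le_of_even (h : StringFamily g N) (hα : Fintype.card α = N + 1)
    (hN : Even N) (hN6 : 6 ≤ N) {H : Subgroup (Perm α)} (hH : IsPretransitive H α)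
    (hg : ∀ i, 2 ≤ i → i < N → g i ∈ H) : alternatingGroup α ≤ H := by
  obtain ⟨q, rfl⟩ : ∃ q, N = 2 * (q + 1) := by
    obtain ⟨k, hk⟩ := hN
    exact ⟨k - 1, by omega⟩
  have hchain := h.isThreeCycleChain (c := 0) (q := q + 1) (by omega) fun l hl =>
    h.isThreeCycle_of_even hα hN (by omega)
  refine hchain.tail.alternatingGroup_le (by omega) (fun i hi => ?_) (by omega) hH
    fun l hl => H.mul_mem (hg _ (by omega) (by omega)) (hg _ (by omega) (by omega))
  exact hchain.not_disjoint_of_card_le (fun l _ => Finset.subset_univ _)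
    (by rw [Finset.card_univ]; omega) (by omega)

lemma alternatingGroup_le_of_odd (h : StringFamily g N) (hα : Fintype.card α = N + 1)
    (hN : Odd N) (hN7 : 7 ≤ N) {H : Subgroup (Perm α)} (hH : IsPretransitive H α)
    (hg : ∀ i, 2 ≤ i → i < N → g i ∈ H) : alternatingGroup α ≤ H := by
  obtain ⟨q, rfl⟩ : ∃ q, N = 2 * q + 3 := by
    obtain ⟨k, hk⟩ := hN
    exact ⟨k - 1, by omega⟩
  have h3 := fun l (hl : l < q) => h.isThreeCycle_of_odd hα hN hN7 (l := l) (by omega)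
  have hchain := h.isThreeCycleChain (c := 3) (q := q) (by omega) fun l hl => (h3 l hl).2.1
  have hsub : ∀ l < q,
      (g (2 * l + 3) * g (2 * l + 3 + 1)).support ⊆ Finset.univ \ (g 0 * g 1).support :=
    fun l hl => Finset.subset_sdiff.2 ⟨Finset.subset_univ _,
      (Perm.disjoint_iff_disjoint_support.1 (h3 l hl).2.2).symm⟩
  refine hchain.alternatingGroup_le (by omega)
    (fun i => hchain.not_disjoint_of_card_le hsub ?_) (by omega) hH
    fun l hl => H.mul_mem (hg _ (by omega) (by omega)) (hg _ (by omega) (by omega))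
  rw [Finset.card_sdiff_of_subset (Finset.subset_univ _), Finset.card_univ,
    (h3 0 (by omega)).1.card_support]
  omega

lemma alternatingGroup_le (h : StringFamily g N) (hα : Fintype.card α = N + 1) (hN : 6 ≤ N)
    {H : Subgroup (Perm α)} (hH : IsPretransitive H α) (hg : ∀ i, 2 ≤ i → i < N → g i ∈ H) :
    alternatingGroup α ≤ H := by
  rcases Nat.even_or_odd N with hE | hO
  · exact h.alternatingGroup_le_of_even hα hE hN hH hg
  · exact h.alternatingGroup_le_of_odd hα hO
      (by obtain ⟨k, hk⟩ := hO; omega) hH hg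

lemma isThreeCycle_zero (h : StringFamily g N) (hα : Fintype.card α = N + 1) (hN : 6 ≤ N) :
    (g 0 * g 1).IsThreeCycle := by
  rcases Nat.even_or_odd N with hE | hO
  · exact h.isThreeCycle_of_even hα hE (l := 0) (by omega)
  · exact (h.isThreeCycle_of_odd hα hO (by obtain ⟨k, hk⟩ := hO; omega) (l := 0) (by omega)).1

end StringFamily

end Chains

section Gap

open Equiv MulAction

lemma eq_one_of_commute_alternatingGroup {α : Type*} [Fintype α] [DecidableEq α]
    (hα : 4 ≤ Fintype.card α) {w : Perm α} (hw : ∀ f ∈ alternatingGroup α, Commute w f) :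
    w = 1 := by
  by_contra hne
  obtain ⟨x, hx⟩ : ∃ x, w x ≠ x := not_forall.1 fun h => hne (Equiv.ext h)
  obtain ⟨y, -, hy⟩ := Finset.exists_mem_notMem_of_card_lt_card (t := Finset.univ)
    (Finset.card_le_two.trans_lt (by rw [Finset.card_univ]; omega) : ({x, w x} : Finset α).card < _)
  obtain ⟨z, -, hz⟩ := Finset.exists_mem_notMem_of_card_lt_card (t := Finset.univ)
    (Finset.card_le_three.trans_lt (by rwa [Finset.card_univ]) :
      ({x, w x, y} : Finset α).card < _)
  simp only [Finset.mem_insert, Finset.mem_singleton, not_or] at hy hz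
  have h3 : (swap (w x) y * swap (w x) z).IsThreeCycle :=
    Perm.isThreeCycle_swap_mul_swap_same (Ne.symm hy.2) (Ne.symm hz.2.1) (Ne.symm hz.2.2)
  have hfix := Perm.congr_fun (hw _ h3.mem_alternatingGroup).eq x
  simp only [Perm.mul_apply, swap_apply_left] at hfix
  rw [swap_apply_of_ne_of_ne (Ne.symm hx) (Ne.symm hz.1),
    swap_apply_of_ne_of_ne (Ne.symm hx) (Ne.symm hy.1), swap_apply_of_ne_of_ne hz.2.1 hz.2.2]
    at hfix
  exact hz.2.1 hfix.symm

lemma eq_one_of_isPretransitive_sup {α : Type*} {H K : Subgroup (Perm α)}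
    (hHK : ∀ f ∈ H, ∀ k ∈ K, Commute f k) (hT : IsPretransitive ↥(H ⊔ K) α) {x : α}
    (hx : ∀ k ∈ K, k x = x) {k : Perm α} (hk : k ∈ K) : k = 1 := by
  ext y
  obtain ⟨f, rfl⟩ := exists_smul_eq ↥(H ⊔ K) x y
  obtain ⟨h, hh, l, hl, hf⟩ := exists_mul_eq_of_mem_sup hHK f.2
  have hfx : f • x = h x := by
    rw [Subgroup.smul_def, Perm.smul_def, ← hf, Perm.mul_apply, hx l hl]
  have hc := Perm.congr_fun (hHK h hh k hk).eq x
  rw [Perm.mul_apply, Perm.mul_apply, hx k hk] at hc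
  rw [hfx, ← hc, Perm.one_apply]

/-- The intersection property of the subfamilies of `g 0, …, g (N - 1)`, required only of pairs of
index sets without a common index in `D`. -/
def IntersectionPropertyOff {G : Type*} [Group G] (g : ℕ → G) (N : ℕ) (D : Set ℕ) : Prop :=
  ∀ J ⊆ Set.Iio N, ∀ K ⊆ Set.Iio N, Disjoint (J ∩ K) D →
    Subgroup.closure (g '' J) ⊓ Subgroup.closure (g '' K) ≤ Subgroup.closure (g '' (J ∩ K))

namespace StringFamily

lemma eq_one_or_eq_of_mem_pair {G : Type*} [Group G] {g : ℕ → G} {N : ℕ} (h : StringFamily g N)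
    {D : Set ℕ} (hip : IntersectionPropertyOff g N D) {d i : ℕ} (hdN : d < N) (hd : d ∈ D)
    (hiN : i < N) {f : G} (hf : f ∈ Subgroup.closure (g '' {d, i}))
    (hfD : f ∈ Subgroup.closure (g '' (Set.Iio N \ D))) : f = 1 ∨ f = g i := by
  have hf' := hip {d, i} (Set.pair_subset hdN hiN) _ Set.sdiff_subset
    (Set.disjoint_sdiff_left.mono_left Set.inter_subset_right) ⟨hf, hfD⟩
  have hsub : ({d, i} : Set ℕ) ∩ (Set.Iio N \ D) ⊆ {i} := by
    rintro j ⟨rfl | rfl, hj⟩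
    · exact absurd hd hj.2
    · rfl
  have hfi := Subgroup.closure_mono (Set.image_mono hsub) hf'
  rw [Set.image_singleton, ← Subgroup.zpowers_eq_closure] at hfi
  exact eq_one_or_eq_of_mem_zpowers (h.mul_self i hiN) hfi

variable {α : Type*} [Fintype α] [DecidableEq α] {g : ℕ → Perm α} {N : ℕ}

lemma commute_of_alternatingGroup_le (h : StringFamily g N) {D : Set ℕ}
    (hip : IntersectionPropertyOff g N D) {d i : ℕ} (hdN : d < N) (hd : d ∈ D) (hiN : i < N)
    (hA : alternatingGroup α ≤ Subgroup.closure (g '' (Set.Iio N \ D))) :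
    Commute (g d) (g i) := by
  have hmem : g d * g i ∈ Subgroup.closure (g '' {d, i}) :=
    Subgroup.mul_mem _ (apply_mem_closure_image (Set.mem_insert d _))
      (apply_mem_closure_image (Set.mem_insert_of_mem d rfl))
  have halt : g d * g i * (g d * g i) ∈ alternatingGroup α := by
    rw [Perm.mem_alternatingGroup, map_mul, Int.units_mul_self]
  refine commute_of_mul_self (h.mul_self d hdN) (h.mul_self i hiN)
    ((h.eq_one_or_eq_of_mem_pair hip hdN hd hiN (Subgroup.mul_mem _ hmem hmem)
      (hA halt)).resolve_right fun heq => h.ne_one i hiN ?_)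
  rw [← mul_assoc, mul_eq_right, mul_assoc, mul_eq_one_iff_eq_inv',
    inv_eq_of_mul_eq_one_left (h.mul_self d hdN), mul_eq_right] at heq
  exact heq

lemma not_alternatingGroup_le (h : StringFamily g N) (hα : 4 ≤ Fintype.card α) {D : Set ℕ}
    (hip : IntersectionPropertyOff g N D) {d : ℕ} (hdN : d < N) (hd : d ∈ D) :
    ¬ alternatingGroup α ≤ Subgroup.closure (g '' (Set.Iio N \ D)) := fun hA => by
  refine h.ne_one d hdN (eq_one_of_commute_alternatingGroup hα fun f hf => ?_)
  refine commute_of_mem_closure (s := {g d}) ?_ (Subgroup.subset_closure rfl) (hA hf)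
  rintro _ rfl _ ⟨i, hi, rfl⟩
  exact h.commute_of_alternatingGroup_le hip hdN hd hi.1 hA

lemma not_isPretransitive_of_farApart (h : StringFamily g N) {X Y : Set ℕ} (hX : X ⊆ Set.Iio N)
    (hY : Y ⊆ Set.Iio N) (hXY : FarApart X Y) (hYne : Y.Nonempty) {t : Perm α}
    (ht : t.IsThreeCycle) (htX : t ∈ Subgroup.closure (g '' X)) :
    ¬ IsPretransitive (Subgroup.closure (g '' (X ∪ Y))) α := fun hT => by
  obtain ⟨j, hj⟩ := hYne
  obtain ⟨x, hx⟩ : t.support.Nonempty := by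
    rw [← Finset.card_pos, ht.card_support]
    exact Nat.succ_pos 2
  have hle : Subgroup.closure (g '' Y) ≤ stabilizer (Perm α) x := by
    rw [Subgroup.closure_le]
    rintro _ ⟨k, hk, rfl⟩
    exact apply_eq_self_of_mem_support_of_isThreeCycle ht (h.mul_self k (hY hk))
      (h.commute_of_farApart hX hY hXY htX (apply_mem_closure_image hk)).symm hx
  rw [Set.image_union, Subgroup.closure_union] at hT
  exact h.ne_one j (hY hj) (eq_one_of_isPretransitive_sup
    (fun _ hf _ => h.commute_of_farApart hX hY hXY hf) hT hle (apply_mem_closure_image hj))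

section ConsecutivePair

variable {c : ℕ} {D : Set ℕ}

lemma exists_isThreeCycle_mem_closure_inter_Iio (h : StringFamily g N) (hα : Fintype.card α = N + 1)
    (hN : 6 ≤ N) (hD : ∀ d ∈ D, d + 1 = c ∨ d = c) (hc : 3 ≤ c) :
    ∃ t : Perm α, t.IsThreeCycle ∧ t ∈ Subgroup.closure (g '' ((Set.Iio N \ D) ∩ Set.Iio c)) := by
  refine ⟨_, h.isThreeCycle_zero hα hN, Subgroup.mul_mem _ (apply_mem_closure_image ?_)
    (apply_mem_closure_image ?_)⟩
  all_goals
    refine ⟨⟨Set.mem_Iio.2 (by omega), fun hd => ?_⟩, Set.mem_Iio.2 (by omega)⟩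
    have := hD _ hd
    omega

lemma exists_isThreeCycle_mem_closure_inter_Ici (h : StringFamily g N) (hα : Fintype.card α = N + 1)
    (hN : 6 ≤ N) (hD : ∀ d ∈ D, d + 1 = c ∨ d = c) (hc : c ≤ 2) :
    ∃ t : Perm α, t.IsThreeCycle ∧ t ∈ Subgroup.closure (g '' ((Set.Iio N \ D) ∩ Set.Ici c)) := by
  refine ⟨_, h.reverse.isThreeCycle_zero hα hN, Subgroup.mul_mem _ (apply_mem_closure_image ?_)
    (apply_mem_closure_image ?_)⟩
  all_goals
    refine ⟨⟨Set.mem_Iio.2 (by omega), fun hd => ?_⟩, Set.mem_Ici.2 (by omega)⟩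
    have := hD _ hd
    omega

lemma alternatingGroup_le_of_inter_Iio_eq_empty (h : StringFamily g N) (hα : Fintype.card α = N + 1)
    (hN : 6 ≤ N) (hD : ∀ d ∈ D, d + 1 = c ∨ d = c)
    (hT : IsPretransitive (Subgroup.closure (g '' (Set.Iio N \ D))) α)
    (hX : (Set.Iio N \ D) ∩ Set.Iio c = ∅) :
    alternatingGroup α ≤ Subgroup.closure (g '' (Set.Iio N \ D)) := by
  refine h.alternatingGroup_le hα hN hT fun i hi hiN =>
    apply_mem_closure_image ⟨hiN, fun hiD => Set.eq_empty_iff_forall_notMem.1 hX 0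
      ⟨⟨Set.mem_Iio.2 (by omega), fun h0 => ?_⟩, ?_⟩⟩
  · have := hD _ hiD
    have := hD _ h0
    omega
  · have := hD _ hiD
    exact Set.mem_Iio.2 (by omega)

lemma alternatingGroup_le_of_inter_Ici_eq_empty (h : StringFamily g N) (hα : Fintype.card α = N + 1)
    (hN : 6 ≤ N) (hD : ∀ d ∈ D, d + 1 = c ∨ d = c)
    (hT : IsPretransitive (Subgroup.closure (g '' (Set.Iio N \ D))) α)
    (hY : (Set.Iio N \ D) ∩ Set.Ici c = ∅) :
    alternatingGroup α ≤ Subgroup.closure (g '' (Set.Iio N \ D)) := by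
  refine h.reverse.alternatingGroup_le hα hN hT fun i hi hiN => apply_mem_closure_image
    ⟨Set.mem_Iio.2 (by omega), fun hiD => Set.eq_empty_iff_forall_notMem.1 hY (N - 1)
      ⟨⟨Set.mem_Iio.2 (by omega), fun h0 => ?_⟩, Set.mem_Ici.2 ?_⟩⟩
  all_goals
    have := hD _ hiD
    try have := hD _ h0
    omega

lemma farApart_inter_Iio_inter_Ici (hD : ∀ d ∈ D, d + 1 = c ∨ d = c) (hne : D.Nonempty) :
    FarApart ((Set.Iio N \ D) ∩ Set.Iio c) ((Set.Iio N \ D) ∩ Set.Ici c) := by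
  rintro k ⟨⟨-, hkD⟩, hk⟩ l ⟨⟨-, hlD⟩, hl⟩
  rw [Set.mem_Iio] at hk
  rw [Set.mem_Ici] at hl
  by_contra hlt
  obtain ⟨d, hd⟩ := hne
  have hdk : d ≠ k := fun e => hkD (e ▸ hd)
  have hdl : d ≠ l := fun e => hlD (e ▸ hd)
  have := hD d hd
  omega

lemma not_isPretransitive {α : Type*} [Fintype α] {g : ℕ → Perm α} (h : StringFamily g N)
    (hα : Fintype.card α = N + 1) (hN : 6 ≤ N) (hDN : D ⊆ Set.Iio N)
    (hD : ∀ d ∈ D, d + 1 = c ∨ d = c) (hne : D.Nonempty) (hip : IntersectionPropertyOff g N D) :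
    ¬ IsPretransitive (Subgroup.closure (g '' (Set.Iio N \ D))) α := fun hT => by
  classical
  obtain ⟨d, hd⟩ := hne
  have hA := h.not_alternatingGroup_le (by omega) hip (hDN hd) hd
  have hXY := farApart_inter_Iio_inter_Ici (N := N) hD ⟨d, hd⟩
  rcases Set.eq_empty_or_nonempty ((Set.Iio N \ D) ∩ Set.Iio c) with hX | hX
  · exact hA (h.alternatingGroup_le_of_inter_Iio_eq_empty hα hN hD hT hX)
  rcases Set.eq_empty_or_nonempty ((Set.Iio N \ D) ∩ Set.Ici c) with hY | hY
  · exact hA (h.alternatingGroup_le_of_inter_Ici_eq_empty hα hN hD hT hY)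
  have hXN : (Set.Iio N \ D) ∩ Set.Iio c ⊆ Set.Iio N := fun _ hk => hk.1.1
  have hYN : (Set.Iio N \ D) ∩ Set.Ici c ⊆ Set.Iio N := fun _ hk => hk.1.1
  rw [← Set.inter_univ (Set.Iio N \ D), ← Set.Iio_union_Ici (a := c),
    Set.inter_union_distrib_left] at hT
  rcases Nat.lt_or_ge 2 c with hc | hc
  · obtain ⟨t, ht, htX⟩ := h.exists_isThreeCycle_mem_closure_inter_Iio hα hN hD hc
    exact h.not_isPretransitive_of_farApart hXN hYN hXY hY ht htX hT
  · obtain ⟨t, ht, htY⟩ := h.exists_isThreeCycle_mem_closure_inter_Ici hα hN hD hc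
    rw [Set.union_comm] at hT
    exact h.not_isPretransitive_of_farApart hYN hXN hXY.symm hX ht htY hT

end ConsecutivePair

end StringFamily

end Gap

section Dihedral

open Equiv

variable {α : Type*} {a κ f : Perm α} {O : Finset α} {E : Subgroup (Perm α)} {x y : α}

/-- The points `x` and `y` are in the same orbit of the dihedral group generated by an involution
`a` and a permutation `κ` inverted by it. -/
def dihedralRel (a κ : Perm α) (x y : α) : Prop :=
  κ.SameCycle x y ∨ κ.SameCycle (a x) y

/-- The involution `a` exchanges `O` and its complement. -/
structure ExchangesCompl (a : Perm α) (O : Finset α) : Prop where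
  mul_self : a * a = 1
  apply_mem_iff : ∀ x, a x ∈ O ↔ x ∉ O

lemma exists_zpow_two_mul_eq {G : Type*} [Group G] {k : G} (ho : Odd (orderOf k)) (i : ℤ) :
    ∃ j : ℤ, k ^ (2 * j) = k ^ i := by
  obtain ⟨p, hp⟩ := ho
  refine ⟨i * (p + 1), ?_⟩
  have hord : k ^ ((orderOf k : ℤ) * i) = 1 := by
    rw [zpow_mul, zpow_natCast, pow_orderOf_eq_one, one_zpow]
  rw [← mul_one (k ^ i), ← hord, ← zpow_add, hp]
  congr 1
  push_cast
  ring

lemma sameCycle_apply_of_semiconjBy_inv (hκ : SemiconjBy a κ κ⁻¹) (hxy : κ.SameCycle x y) :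
    κ.SameCycle (a x) (a y) := by
  obtain ⟨i, rfl⟩ := hxy
  exact ⟨-i, (apply_zpow_apply_of_semiconjBy_inv hκ i x).symm⟩

lemma dihedralRel_apply (hfa : Commute f a) (hfκ : Commute f κ) (hxy : dihedralRel a κ x y) :
    dihedralRel a κ (f x) (f y) := by
  rcases hxy with ⟨i, rfl⟩ | ⟨i, rfl⟩
  · exact Or.inl ⟨i, (apply_zpow_apply_of_commute hfκ i x).symm⟩
  · exact Or.inr ⟨i, by
      rw [apply_zpow_apply_of_commute hfκ, show f (a x) = a (f x) from Perm.congr_fun hfa.eq x]⟩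

lemma dihedralRel_of_eq_or_eq_apply (hκ : SemiconjBy a κ κ⁻¹) {u v : α} (hu : κ.SameCycle x u)
    (hv : v = u ∨ v = a u) : dihedralRel a κ x v := by
  rcases hv with rfl | rfl
  · exact Or.inl hu
  · exact Or.inr (sameCycle_apply_of_semiconjBy_inv hκ hu)

namespace ExchangesCompl

variable (h : ExchangesCompl a O)
include h

lemma apply_apply (x : α) : a (a x) = x :=
  Perm.congr_fun h.mul_self x

lemma apply_ne (x : α) : a x ≠ x := fun hx =>
  iff_not_self (hx ▸ h.apply_mem_iff x)

lemma apply_notMem (hx : x ∈ O) : a x ∉ O := fun hax => (h.apply_mem_iff x).1 hax hx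

lemma apply_mem (hx : x ∉ O) : a x ∈ O := (h.apply_mem_iff x).2 hx

lemma dihedralRel_equivalence (hκ : SemiconjBy a κ κ⁻¹) : Equivalence (dihedralRel a κ) := by
  have hcycle {x y : α} (hxy : κ.SameCycle (a x) y) : κ.SameCycle x (a y) := by
    simpa only [h.apply_apply] using sameCycle_apply_of_semiconjBy_inv hκ hxy
  refine ⟨fun x => Or.inl (Perm.SameCycle.refl _ _), ?_, ?_⟩
  · rintro x y (hxy | hxy)
    · exact Or.inl hxy.symm
    · exact Or.inr (hcycle hxy).symm
  · rintro x y z (hxy | hxy) (hyz | hyz)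
    · exact Or.inl (hxy.trans hyz)
    · exact Or.inr ((sameCycle_apply_of_semiconjBy_inv hκ hxy).trans hyz)
    · exact Or.inr (hxy.trans hyz)
    · exact Or.inl ((hcycle hxy).trans hyz)

lemma not_sameCycle_apply (hκ : SemiconjBy a κ κ⁻¹) (ho : Odd (orderOf κ)) (x : α) :
    ¬ κ.SameCycle x (a x) := by
  rintro ⟨i, hi⟩
  obtain ⟨j, hj⟩ := exists_zpow_two_mul_eq ho i
  refine h.apply_ne ((κ ^ j) x) ?_
  rw [apply_zpow_apply_of_semiconjBy_inv hκ, ← hi, ← hj, ← Perm.mul_apply, ← zpow_add]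
  congr 2
  ring

lemma apply_eq_self_of_dihedralRel (hκ : SemiconjBy a κ κ⁻¹) (ho : Odd (orderOf κ))
    (hff : f * f = 1) (hfa : Commute f a) (hfκ : Commute f κ) (hfO : ∀ x ∈ O, f x ∈ O)
    (hx : dihedralRel a κ x (f x)) : f x = x := by
  rcases hx with hx | ⟨i, hi⟩
  · exact apply_eq_self_of_sameCycle ho hff hfκ hx
  exfalso
  -- a suitable point `y` of the cycle of `x` satisfies `f y = a y`
  obtain ⟨j, hj⟩ := exists_zpow_two_mul_eq ho (-i)
  obtain ⟨y, hfy⟩ : ∃ y, f y = a y := by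
    refine ⟨(κ ^ j) x, ?_⟩
    have hpow : κ ^ (j + i) = κ ^ (-j) := by
      rw [← mul_inv_eq_one, ← zpow_neg, ← zpow_add, show j + i + -(-j) = 2 * j + i by ring,
        zpow_add, hj, ← zpow_add, neg_add_cancel, zpow_zero]
    rw [apply_zpow_apply_of_commute hfκ, ← hi, apply_zpow_apply_of_semiconjBy_inv hκ,
      ← Perm.mul_apply, ← zpow_add, hpow]
  by_cases hyO : y ∈ O
  · exact h.apply_notMem hyO (hfy ▸ hfO y hyO)
  · have hfay := hfO _ (h.apply_mem hyO)
    rw [show f (a y) = a (f y) from Perm.congr_fun hfa.eq y, hfy, h.apply_apply] at hfay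
    exact hyO hfay

lemma eq_one_of_commute (hf : Commute f a) (hfix : ∀ y ∈ O, f y = y) : f = 1 := by
  ext1 y
  by_cases hy : y ∈ O
  · exact hfix y hy
  · have hfa := Perm.congr_fun hf.eq y
    rw [Perm.mul_apply, Perm.mul_apply, hfix _ (h.apply_mem hy)] at hfa
    exact (a.injective hfa).symm

lemma exists_mem_eq_or_eq_apply (u : α) : ∃ v ∈ O, v = u ∨ v = a u := by
  by_cases hu : u ∈ O
  · exact ⟨u, hu, Or.inl rfl⟩
  · exact ⟨a u, h.apply_mem hu, Or.inr rfl⟩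

lemma exists_pair_dihedralRel (hκ : SemiconjBy a κ κ⁻¹) (ho : Odd (orderOf κ)) (hx : κ x ≠ x) :
    ∃ y ∈ O, ∃ z ∈ O, dihedralRel a κ x y ∧ dihedralRel a κ x z ∧ y ≠ x ∧ z ≠ x ∧ y ≠ z := by
  have hself : κ.SameCycle x x := Perm.SameCycle.refl _ _
  have hfwd : κ.SameCycle x (κ x) := Perm.sameCycle_apply_right.2 hself
  have hbwd : κ.SameCycle x (κ.symm x) := Perm.sameCycle_symm_apply_right.2 hself
  have hxinv : κ.symm x ≠ x := fun hinv => hx (κ.symm_apply_eq.1 hinv).symm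
  have hne : κ x ≠ κ.symm x := fun heq => hx <| by
    simpa only [zpow_one] using zpow_apply_eq_self_of_two_mul ho (i := 1) (x := x) (by
      rw [mul_one, zpow_two, Perm.mul_apply, heq, apply_symm_apply])
  have hrep : ∀ {u v w : α}, κ.SameCycle x u → κ.SameCycle x v → u ≠ v → w = u ∨ w = a u →
      ¬ (w = v ∨ w = a v) := by
    rintro u v w hu hv huv (rfl | rfl) (rfl | hw)
    · exact huv rfl
    · exact h.not_sameCycle_apply hκ ho v (hw ▸ hv.symm.trans hu)
    · exact h.not_sameCycle_apply hκ ho u (hu.symm.trans hv)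
    · exact huv (a.injective hw)
  obtain ⟨y, hy, hyu⟩ := h.exists_mem_eq_or_eq_apply (κ x)
  obtain ⟨z, hz, hzu⟩ := h.exists_mem_eq_or_eq_apply (κ.symm x)
  exact ⟨y, hy, z, hz, dihedralRel_of_eq_or_eq_apply hκ hfwd hyu,
    dihedralRel_of_eq_or_eq_apply hκ hbwd hzu,
    fun hyx => hrep hfwd hself hx hyu (Or.inl hyx),
    fun hzx => hrep hbwd hself hxinv hzu (Or.inl hzx),
    fun hyz => hrep hfwd hbwd hne hyu (hyz ▸ hzu)⟩

lemma apply_ne_of_dihedralRel (hκ : SemiconjBy a κ κ⁻¹) (hx : x ∈ O) (hy : y ∈ O)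
    (hxy : dihedralRel a κ x y) (hne : y ≠ x) : κ x ≠ x := fun hfix => by
  rcases hxy with ⟨i, rfl⟩ | hxy
  · exact hne (Perm.zpow_apply_eq_self_of_apply_eq_self hfix i)
  · obtain ⟨i, hi⟩ := sameCycle_apply_of_semiconjBy_inv hκ hxy
    rw [h.apply_apply, Perm.zpow_apply_eq_self_of_apply_eq_self hfix i] at hi
    exact h.apply_notMem hy (hi ▸ hx)

lemma isOddSystem_dihedralRel (hκ : SemiconjBy a κ κ⁻¹) (ho : Odd (orderOf κ))
    (hE : ∀ f ∈ E, f * f = 1) (hEa : ∀ f ∈ E, Commute f a) (hEκ : ∀ f ∈ E, Commute f κ)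
    (hO : ∀ f ∈ E, ∀ x ∈ O, f x ∈ O) : IsOddSystem E O (dihedralRel a κ) where
  equivalence := h.dihedralRel_equivalence hκ
  rel_apply f hf _ _ := dihedralRel_apply (hEa f hf) (hEκ f hf)
  apply_eq_of_rel := by
    rintro f hf x - y - hxy hfx
    rcases hxy with ⟨i, rfl⟩ | ⟨i, rfl⟩
    · rw [apply_zpow_apply_of_commute (hEκ f hf), hfx]
    · rw [apply_zpow_apply_of_commute (hEκ f hf),
        show f (a x) = a (f x) from Perm.congr_fun (hEa f hf).eq x, hfx]
  apply_eq_self f hf x _ hx :=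
    h.apply_eq_self_of_dihedralRel hκ ho (hE f hf) (hEa f hf) (hEκ f hf) (hO f hf) hx
  exists_third := by
    intro x hx y hy hxy hne
    obtain ⟨u, hu, v, hv, hru, hrv, hux, hvx, huv⟩ :=
      h.exists_pair_dihedralRel hκ ho (h.apply_ne_of_dihedralRel hκ hx hy hxy hne)
    by_cases huy : u = y
    · exact ⟨v, hv, hrv, hvx, fun hvy => huv (huy.trans hvy.symm)⟩
    · exact ⟨u, hu, hru, hux, huy⟩

lemma movedBy_dihedralRel_nonempty (hκ : SemiconjBy a κ κ⁻¹) (ho : Odd (orderOf κ))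
    (hne : κ ≠ 1) : (movedBy O (dihedralRel a κ)).Nonempty := by
  obtain ⟨u, hu⟩ : ∃ u, κ u ≠ u := not_forall.1 fun hfix => hne (Equiv.ext hfix)
  obtain ⟨x, hx, hxu⟩ := h.exists_mem_eq_or_eq_apply u
  have hκx : κ x ≠ x := by
    rcases hxu with rfl | rfl
    · exact hu
    · intro hfix
      have hau := apply_zpow_apply_of_semiconjBy_inv hκ (-1) u
      rw [neg_neg, zpow_one, hfix, zpow_neg_one] at hau
      exact hu (Perm.inv_eq_iff_eq.1 (a.injective hau)).symm
  obtain ⟨y, hy, -, -, hxy, -, hyx, -⟩ := h.exists_pair_dihedralRel hκ ho hκx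
  exact ⟨x, mem_movedBy.2 ⟨hx, y, hy, hxy, hyx⟩⟩

end ExchangesCompl

end Dihedral

section EvenProduct

open Equiv MulAction

lemma apply_mem_of_mem_closure {α : Type*} {s : Set (Perm α)} {t : Finset α}
    (hs : ∀ f ∈ s, ∀ x ∈ t, f x ∈ t) {f : Perm α} (hf : f ∈ Subgroup.closure s) :
    ∀ x ∈ t, f x ∈ t := by
  induction hf using Subgroup.closure_induction with
  | mem f hf => exact hs f hf
  | one => exact fun x hx => hx
  | mul _ _ _ _ hf hk => exact fun x hx => hf _ (hk x hx)
  | inv _ _ hf => exact fun _ => Perm.perm_symm_on_of_perm_on_finset hf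

lemma two_mul_add_card_le_of_apply_eq_self {α : Type*} [Finite α] {F : Subgroup (Perm α)} {e : ℕ}
    {s t : Finset α} (hF : IsElementaryTwo e F) (hs : ActsFaithfullyOn F s) (hts : t ⊆ s)
    (ht : ∀ f ∈ F, ∀ z ∈ t, f z = z) : 2 * e + t.card ≤ s.card := by
  classical
  have hst : ActsFaithfullyOn F (s \ t) := by
    refine ⟨fun f hf y hy => ?_, fun f hf hy => hs.eq_one f hf fun y hys => ?_⟩
    · rw [Finset.mem_sdiff] at hy ⊢
      refine ⟨hs.apply_mem f hf y hy.1, fun hfy => hy.2 ?_⟩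
      rwa [← f.injective (ht f hf _ hfy)]
    · by_cases hyt : y ∈ t
      · exact ht f hf y hyt
      · exact hy y (Finset.mem_sdiff.2 ⟨hys, hyt⟩)
  have hle := hF.two_mul_le_card hst
  have hcard := Finset.card_sdiff_add_card_eq_card hts
  omega

/-- The indices below `N` at distance at least two from `i` on the left and at least `s` on the
right. -/
def farIndices (N i s : ℕ) : Set ℕ :=
  {j | j < N ∧ (j + 2 ≤ i ∨ i + s ≤ j)}

lemma StringFamily.twoRankAtLeast_farIndices {G : Type*} [Group G] [Finite G] {g : ℕ → G} {N : ℕ}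
    (h : StringFamily g N) {i : ℕ} (hi : i < N) (s : ℕ) :
    TwoRankAtLeast (i / 2 + (N + 1 - i - s) / 2) (Subgroup.closure (g '' farIndices N i s)) := by
  obtain ⟨E, hEW, hE⟩ := h.twoRankAtLeast_image
    (fun t => if t < i / 2 then i % 2 + 2 * t else i + s + 2 * (t - i / 2))
    (i / 2 + (N + 1 - i - s) / 2)
    (by intro s t _ _; split_ifs <;> omega)
    (by intro t _; split_ifs <;> omega)
  refine ⟨E, hEW.trans (Subgroup.closure_mono (Set.image_mono ?_)), hE⟩
  rintro _ ⟨t, ht, rfl⟩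
  rw [Set.mem_Iio] at ht
  rw [farIndices, Set.mem_ofPred_eq]
  dsimp only
  split_ifs <;> omega

/-- The member `g i` of a family exchanges the set `O` of `N` points and its complement; the other
members commuting with `g i`, among them all those far from it, are those indexed by `C`, and they
generate a group acting transitively on `O`. -/
structure HalfTransitive {α : Type*} (g : ℕ → Perm α) (N : ℕ) (O : Finset α) (i : ℕ)
    (C : Set ℕ) : Prop where
  card_eq : O.card = N
  exchangesCompl : ExchangesCompl (g i) O
  subset_Iio : C ⊆ Set.Iio N
  notMem : i ∉ C
  mem_of_far : ∀ j < N, j + 2 ≤ i ∨ i + 2 ≤ j → j ∈ C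
  commute : ∀ j ∈ C, Commute (g j) (g i)
  apply_mem : ∀ f ∈ Subgroup.closure (g '' C), ∀ x ∈ O, f x ∈ O
  exists_apply_eq : ∀ x ∈ O, ∀ y ∈ O, ∃ f ∈ Subgroup.closure (g '' C), f x = y

/-- The points of `O` moved by `g i * g (i + 1)`, where `x` and `g i x` are identified. -/
noncomputable def movedHalf {α : Type*} (g : ℕ → Perm α) (i : ℕ) (O : Finset α) : Finset α :=
  movedBy O (dihedralRel (g i) (g i * g (i + 1)))

lemma movedHalf_subset {α : Type*} {g : ℕ → Perm α} {i : ℕ} {O : Finset α} :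
    movedHalf g i O ⊆ O := fun _ hz => (mem_movedBy.1 hz).1

namespace HalfTransitive

variable {α : Type*} {g : ℕ → Perm α} {N i : ℕ} {O : Finset α} {C : Set ℕ}

section Basic

variable (hC : HalfTransitive g N O i C)
include hC

lemma commute_of_mem_closure {f : Perm α} (hf : f ∈ Subgroup.closure (g '' C)) :
    Commute f (g i) := by
  refine _root_.commute_of_mem_closure (t := {g i}) ?_ hf (Subgroup.subset_closure rfl)
  rintro _ ⟨j, hj, rfl⟩ _ rfl
  exact hC.commute j hj

lemma actsFaithfullyOn {E : Subgroup (Perm α)} (hE : E ≤ Subgroup.closure (g '' C)) :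
    ActsFaithfullyOn E O :=
  ⟨fun f hf => hC.apply_mem f (hE hf), fun _ hf =>
    hC.exchangesCompl.eq_one_of_commute (hC.commute_of_mem_closure (hE hf))⟩

lemma eq_of_forall_apply_mem {S : Finset α} (hSO : S ⊆ O) (hne : S.Nonempty)
    (hS : ∀ j ∈ C, ∀ x ∈ S, g j x ∈ S) : S = O := by
  obtain ⟨x, hx⟩ := hne
  refine hSO.antisymm fun y hy => ?_
  obtain ⟨f, hf, rfl⟩ := hC.exists_apply_eq x (hSO hx) y hy
  exact apply_mem_of_mem_closure (by rintro _ ⟨j, hj, rfl⟩; exact hS j hj) hf x hx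

lemma farIndices_subset {s : ℕ} (hs : 2 ≤ s) : farIndices N i s ⊆ C := fun j hj =>
  hC.mem_of_far j hj.1 (by have := hj.2; omega)

lemma closure_farIndices_le {s : ℕ} (hs : 2 ≤ s) :
    Subgroup.closure (g '' farIndices N i s) ≤ Subgroup.closure (g '' C) :=
  Subgroup.closure_mono (Set.image_mono (hC.farIndices_subset hs))

lemma movedHalf_nonempty (h : StringFamily g N) (hi : i + 1 < N)
    (ho : Odd (orderOf (g i * g (i + 1)))) : (movedHalf g i O).Nonempty :=
  hC.exchangesCompl.movedBy_dihedralRel_nonempty (h.semiconjBy_inv hi) ho (h.mul_ne_one hi)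

variable (h : StringFamily g N) (hi : i + 1 < N) (hiC : i + 1 ∉ C)
include h hi hiC

lemma commute_mul {j : ℕ} (hj : j ∈ C) (hj2 : j ≠ i + 2) : Commute (g j) (g i * g (i + 1)) := by
  have hji : j ≠ i := fun e => hC.notMem (e ▸ hj)
  have hji1 : j ≠ i + 1 := fun e => hiC (e ▸ hj)
  exact (hC.commute j hj).mul_right (h.commute (by omega) (hC.subset_Iio hj) hi)

lemma apply_mem_movedHalf {j : ℕ} (hj : j ∈ C) (hj2 : j ≠ i + 2) {z : α}
    (hz : z ∈ movedHalf g i O) : g j z ∈ movedHalf g i O := by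
  obtain ⟨hzO, w, hwO, hzw, hwz⟩ := mem_movedBy.1 hz
  have hjO := hC.apply_mem (g j) (apply_mem_closure_image hj)
  exact mem_movedBy.2 ⟨hjO z hzO, g j w, hjO w hwO,
    dihedralRel_apply (hC.commute j hj) (hC.commute_mul h hi hiC hj hj2) hzw,
    fun e => hwz ((g j).injective e)⟩

variable (ho : Odd (orderOf (g i * g (i + 1))))
include ho

lemma isOddSystem {s : ℕ} (hs : 3 ≤ s) {E : Subgroup (Perm α)}
    (hE : E ≤ Subgroup.closure (g '' farIndices N i s)) (hsq : ∀ f ∈ E, f * f = 1) :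
    IsOddSystem E O (dihedralRel (g i) (g i * g (i + 1))) := by
  have hEC := hE.trans (hC.closure_farIndices_le (Nat.le_of_succ_le hs))
  refine hC.exchangesCompl.isOddSystem_dihedralRel (h.semiconjBy_inv hi) ho hsq
    (fun f hf => hC.commute_of_mem_closure (hEC hf)) (fun f hf => ?_)
    (hC.actsFaithfullyOn hEC).apply_mem
  refine _root_.commute_of_mem_closure (t := {g i * g (i + 1)}) ?_ (hE hf)
    (Subgroup.subset_closure rfl)
  rintro _ ⟨j, hj, rfl⟩ _ rfl
  exact hC.commute_mul h hi hiC (hC.farIndices_subset (Nat.le_of_succ_le hs) hj)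
    (by have := hj.2; omega)

end Basic

section OddOrder

variable (hC : HalfTransitive g N O i C) (h : StringFamily g N) (hi : i + 1 < N)
  (hiC : i + 1 ∉ C)

include hC h in
lemma two_mul_add_card_union_le [Finite α] [DecidableEq α] {F : Subgroup (Perm α)} {e : ℕ}
    (hi2 : i + 2 < N) (hF : F ≤ Subgroup.closure (g '' farIndices N i 4))
    (hFe : IsElementaryTwo e F) (hfix : ∀ f ∈ F, ∀ z ∈ movedHalf g i O, f z = z) :
    2 * e + (movedHalf g i O ∪ (movedHalf g i O).image (g (i + 2))).card ≤ N := by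
  have hi2C : g (i + 2) ∈ Subgroup.closure (g '' C) :=
    apply_mem_closure_image (hC.mem_of_far _ hi2 (Or.inr le_rfl))
  rw [← hC.card_eq]
  refine two_mul_add_card_le_of_apply_eq_self hFe
    (hC.actsFaithfullyOn (hF.trans (hC.closure_farIndices_le (by omega)))) ?_ fun f hf z hz => ?_
  · refine Finset.union_subset movedHalf_subset fun z hz => ?_
    obtain ⟨w, hw, rfl⟩ := Finset.mem_image.1 hz
    exact hC.apply_mem _ hi2C w (movedHalf_subset hw)
  · rcases Finset.mem_union.1 hz with hz | hz
    · exact hfix f hf z hz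
    · obtain ⟨w, hw, rfl⟩ := Finset.mem_image.1 hz
      have hcomm : Commute f (g (i + 2)) := by
        refine h.commute_of_farApart (J := farIndices N i 4) (K := {i + 2}) (fun j hj => hj.1)
          (Set.singleton_subset_iff.2 hi2) ?_ (hF hf) (apply_mem_closure_image rfl)
        rintro j hj _ rfl
        have := hj.2
        omega
      rw [← Perm.mul_apply, hcomm.eq, Perm.mul_apply, hfix f hf w hw]

variable (ho : Odd (orderOf (g i * g (i + 1))))
include hC h hi hiC ho

lemma card_movedHalf_of_odd [Finite α] (hNo : Odd N) {x : α} (hx : x ∈ movedHalf g i O) :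
    (movedHalf g i O).card = 3 ∧
      ∀ z ∈ movedHalf g i O, dihedralRel (g i) (g i * g (i + 1)) x z := by
  obtain ⟨p, hp⟩ := hNo
  obtain ⟨E, hEW, hE⟩ := h.twoRankAtLeast_farIndices (Nat.lt_of_succ_lt hi) 3
  have hcard := hC.card_eq
  rcases (hC.isOddSystem h hi hiC ho le_rfl hEW hE.mul_self).card_movedBy_of_card_le hE
    (hC.actsFaithfullyOn (hEW.trans (hC.closure_farIndices_le (by omega))))
    (by omega) hx with ⟨-, hr, h3 | ⟨-, hs⟩⟩ | ⟨-, hs, -⟩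
  · exact ⟨h3, hr⟩
  · omega
  · omega

variable (hN : 7 ≤ N)
include hN

lemma movedHalf_ne [Finite α] : movedHalf g i O ≠ O := fun heq => by
  obtain ⟨E, hEW, hE⟩ := h.twoRankAtLeast_farIndices (Nat.lt_of_succ_lt hi) 3
  obtain ⟨x, hx⟩ := hC.movedHalf_nonempty h hi ho
  have hcases := (hC.isOddSystem h hi hiC ho le_rfl hEW hE.mul_self).card_movedBy_of_card_le hE
    (hC.actsFaithfullyOn (hEW.trans (hC.closure_farIndices_le (by omega))))
    (by rw [hC.card_eq]; omega) hx
  have hcard : (movedHalf g i O).card = N := by rw [heq, hC.card_eq]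
  unfold movedHalf at hcard
  omega

lemma add_two_lt [Finite α] : i + 2 < N := by
  by_contra hlt
  refine hC.movedHalf_ne h hi hiC ho hN (hC.eq_of_forall_apply_mem movedHalf_subset
    (hC.movedHalf_nonempty h hi ho) fun j hj _ => hC.apply_mem_movedHalf h hi hiC hj ?_)
  have : j < N := hC.subset_Iio hj
  omega

lemma exists_apply_notMem_movedHalf [Finite α] :
    ∃ z ∈ movedHalf g i O, g (i + 2) z ∉ movedHalf g i O := by
  by_contra! hmem
  refine hC.movedHalf_ne h hi hiC ho hN (hC.eq_of_forall_apply_mem movedHalf_subset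
    (hC.movedHalf_nonempty h hi ho) fun j hj z hz => ?_)
  by_cases hj2 : j = i + 2
  · exact hj2 ▸ hmem z hz
  · exact hC.apply_mem_movedHalf h hi hiC hj hj2 hz

lemma card_movedHalf_lt_card_union [Finite α] [DecidableEq α] :
    (movedHalf g i O).card < (movedHalf g i O ∪ (movedHalf g i O).image (g (i + 2))).card := by
  obtain ⟨z, hz, hzM⟩ := hC.exists_apply_notMem_movedHalf h hi hiC ho hN
  exact Finset.card_lt_card (Finset.ssubset_iff_of_subset Finset.subset_union_left |>.2
    ⟨_, Finset.mem_union_right _ (Finset.mem_image_of_mem _ hz), hzM⟩)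

lemma card_movedHalf_of_even [Finite α] (hNe : Even N) {x : α} (hx : x ∈ movedHalf g i O) :
    (movedHalf g i O).card = 3 ∧
      ∀ z ∈ movedHalf g i O, dihedralRel (g i) (g i * g (i + 1)) x z := by
  classical
  obtain ⟨p, hp⟩ := hNe
  have hi2 := hC.add_two_lt h hi hiC ho hN
  have hlt := hC.card_movedHalf_lt_card_union h hi hiC ho hN
  obtain ⟨E, hEW, hE⟩ := h.twoRankAtLeast_farIndices (Nat.lt_of_succ_lt hi) 4
  rcases (hC.isOddSystem h hi hiC ho (by omega) hEW hE.mul_self).card_movedBy_of_card_le hE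
    (hC.actsFaithfullyOn (hEW.trans (hC.closure_farIndices_le (by omega))))
    (by rw [hC.card_eq]; omega) hx with ⟨hfix, hr, h3 | ⟨h4, -⟩⟩ | ⟨h6, -, -, F, hFE, hF, hfix⟩
  · exact ⟨h3, hr⟩
  · have := hC.two_mul_add_card_union_le h hi2 hEW hE hfix
    rw [movedHalf, h4] at hlt
    rw [movedHalf] at this
    omega
  · have := hC.two_mul_add_card_union_le h hi2 (hFE.trans hEW) hF hfix
    rw [movedHalf, h6] at hlt
    rw [movedHalf] at this
    omega

lemma card_movedHalf [Finite α] {x : α} (hx : x ∈ movedHalf g i O) :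
    (movedHalf g i O).card = 3 ∧
      ∀ z ∈ movedHalf g i O, dihedralRel (g i) (g i * g (i + 1)) x z :=
  (Nat.even_or_odd N).elim (fun hNe => hC.card_movedHalf_of_even h hi hiC ho hN hNe hx)
    fun hNo => hC.card_movedHalf_of_odd h hi hiC ho hNo hx

lemma apply_eq_self_of_mem_movedHalf [Finite α] {j : ℕ} (hj : j ∈ C) (hj2 : j ≠ i + 2) {z : α}
    (hz : z ∈ movedHalf g i O) : g j z = z :=
  hC.exchangesCompl.apply_eq_self_of_dihedralRel (h.semiconjBy_inv hi) ho
    (h.mul_self j (hC.subset_Iio hj)) (hC.commute j hj) (hC.commute_mul h hi hiC hj hj2)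
    (hC.apply_mem _ (apply_mem_closure_image hj))
    ((hC.card_movedHalf h hi hiC ho hN hz).2 _ (hC.apply_mem_movedHalf h hi hiC hj hj2 hz))

lemma apply_notMem_movedHalf [Finite α] {w : α} (hw : w ∈ movedHalf g i O) :
    g (i + 2) w ∉ movedHalf g i O := fun hgw => by
  classical
  have hpair : ({w, g (i + 2) w} : Finset α) = O := by
    refine hC.eq_of_forall_apply_mem
      (Finset.insert_subset (movedHalf_subset hw)
        (Finset.singleton_subset_iff.2 (movedHalf_subset hgw))) (Finset.insert_nonempty _ _) ?_
    intro j hj z hz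
    by_cases hj2 : j = i + 2
    · have hinv := Perm.congr_fun (h.mul_self (i + 2) (hj2 ▸ hC.subset_Iio hj)) w
      rw [Perm.mul_apply, Perm.one_apply] at hinv
      rw [Finset.mem_insert, Finset.mem_singleton] at hz ⊢
      rcases hz with rfl | rfl
      · exact Or.inr (hj2 ▸ rfl)
      · exact Or.inl (hj2 ▸ hinv)
    · rwa [hC.apply_eq_self_of_mem_movedHalf h hi hiC ho hN hj hj2]
      rcases Finset.mem_insert.1 hz with rfl | hz
      · exact hw
      · exact Finset.mem_singleton.1 hz ▸ hgw
  have hle := Finset.card_le_two (a := w) (b := g (i + 2) w)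
  rw [hpair, hC.card_eq] at hle
  omega

lemma card_union_image_movedHalf [Finite α] [DecidableEq α] :
    (movedHalf g i O ∪ (movedHalf g i O).image (g (i + 2))).card = 6 := by
  obtain ⟨x, hx⟩ := hC.movedHalf_nonempty h hi ho
  have hdisj : Disjoint (movedHalf g i O) ((movedHalf g i O).image (g (i + 2))) := by
    rw [Finset.disjoint_right]
    rintro _ hz
    obtain ⟨w, hw, rfl⟩ := Finset.mem_image.1 hz
    exact hC.apply_notMem_movedHalf h hi hiC ho hN hw
  rw [Finset.card_union_of_disjoint hdisj, Finset.card_image_of_injective _ (g (i + 2)).injective,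
    (hC.card_movedHalf h hi hiC ho hN hx).1]

end OddOrder

lemma even_orderOf [Finite α] (hC : HalfTransitive g N O i C) (h : StringFamily g N) (hN : 7 ≤ N)
    (hi : i + 1 < N) (hiC : i + 1 ∉ C) : Even (orderOf (g i * g (i + 1))) := by
  classical
  by_contra hne
  have ho := Nat.not_even_iff_odd.1 hne
  obtain ⟨E, hEW, hE⟩ := h.twoRankAtLeast_farIndices (Nat.lt_of_succ_lt hi) 4
  have hfix : ∀ f ∈ E, ∀ z ∈ movedHalf g i O, f z = z := by
    intro f hf z hz
    have hle : Subgroup.closure (g '' farIndices N i 4) ≤ stabilizer (Perm α) z := by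
      rw [Subgroup.closure_le]
      rintro _ ⟨j, hj, rfl⟩
      exact hC.apply_eq_self_of_mem_movedHalf h hi hiC ho hN (hC.farIndices_subset (by omega) hj)
        (by have := hj.2; omega) hz
    exact hle (hEW hf)
  have hbound := hC.two_mul_add_card_union_le h (hC.add_two_lt h hi hiC ho hN) hEW hE hfix
  rw [hC.card_union_image_movedHalf h hi hiC ho hN] at hbound
  omega

lemma reverse (hC : HalfTransitive g N O i C) (hi : i < N) :
    HalfTransitive (fun k => g (N - 1 - k)) N O (N - 1 - i) {k | k < N ∧ N - 1 - k ∈ C} := by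
  have hrev : ∀ k < N, N - 1 - (N - 1 - k) = k := fun k hk => by omega
  have himage : (fun k => g (N - 1 - k)) '' {k | k < N ∧ N - 1 - k ∈ C} = g '' C := by
    ext f
    constructor
    · rintro ⟨k, hk, rfl⟩
      exact ⟨_, hk.2, rfl⟩
    · rintro ⟨k, hk, rfl⟩
      have hkN : k < N := hC.subset_Iio hk
      exact ⟨N - 1 - k, ⟨by omega, by rwa [hrev k hkN]⟩, congrArg g (hrev k hkN)⟩
  exact {
    card_eq := hC.card_eq
    exchangesCompl := by rw [hrev i hi]; exact hC.exchangesCompl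
    subset_Iio := fun k hk => hk.1
    notMem := fun hk => hC.notMem (by rw [← hrev i hi]; exact hk.2)
    mem_of_far := fun k hk hki => ⟨hk, hC.mem_of_far _ (by omega) (by omega)⟩
    commute := fun k hk => by rw [hrev i hi]; exact hC.commute _ hk.2
    apply_mem := by rw [himage]; exact hC.apply_mem
    exists_apply_eq := by rw [himage]; exact hC.exists_apply_eq }

lemma even_orderOf_of_consecutive [Finite α] (hC : HalfTransitive g N O i C)
    (h : StringFamily g N) (hN : 7 ≤ N) (hi : i < N) {j : ℕ} (hj : j < N)
    (hij : j = i + 1 ∨ i = j + 1) (hjC : j ∉ C) : Even (orderOf (g i * g j)) := by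
  rcases hij with rfl | rfl
  · exact hC.even_orderOf h hN hj hjC
  · have heven := (hC.reverse hi).even_orderOf h.reverse hN (by omega) fun hk => hjC <| by
      rw [show j = N - 1 - (N - 1 - (j + 1) + 1) by omega]
      exact hk.2
    rwa [show N - 1 - (N - 1 - (j + 1)) = j + 1 by omega,
      show N - 1 - (N - 1 - (j + 1) + 1) = j by omega] at heven

end HalfTransitive

end EvenProduct

section IntransitiveCommutingFamily

open Equiv MulAction

/-- The indices below `N`, other than `i`, of the members of a family that commute with `g i`. -/
def commutingIndices {G : Type*} [Group G] (g : ℕ → G) (N i : ℕ) : Set ℕ :=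
  {j | j < N ∧ j ≠ i ∧ Commute (g j) (g i)}

lemma exists_eq_or_eq_mul_of_mem_closure_image_insert {G : Type*} [Group G] {g : ℕ → G} {C : Set ℕ}
    {i : ℕ} (hi : g i * g i = 1) (hC : ∀ j ∈ C, Commute (g j) (g i)) {f : G}
    (hf : f ∈ Subgroup.closure (g '' insert i C)) :
    ∃ k ∈ Subgroup.closure (g '' C), f = k ∨ f = k * g i := by
  rw [Set.image_insert_eq, Set.insert_eq, Set.union_comm, Subgroup.closure_union,
    ← Subgroup.zpowers_eq_closure] at hf
  have hcomm : ∀ k ∈ Subgroup.closure (g '' C), ∀ l ∈ Subgroup.zpowers (g i), Commute k l := by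
    intro k hk l hl
    rw [Subgroup.zpowers_eq_closure] at hl
    refine commute_of_mem_closure ?_ hk hl
    rintro _ ⟨j, hj, rfl⟩ _ rfl
    exact hC j hj
  obtain ⟨k, hk, l, hl, rfl⟩ := exists_mul_eq_of_mem_sup hcomm hf
  refine ⟨k, hk, ?_⟩
  rcases eq_one_or_eq_of_mem_zpowers hi hl with rfl | rfl
  · exact Or.inl (mul_one k)
  · exact Or.inr rfl

lemma ExchangesCompl.two_mul_card {α : Type*} [Fintype α] {a : Perm α} {O : Finset α}
    (h : ExchangesCompl a O) : 2 * O.card = Fintype.card α := by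
  classical
  have himage : Oᶜ = O.map a.toEmbedding := by
    ext x
    rw [Finset.mem_compl, ← h.apply_mem_iff, Finset.mem_map_equiv,
      a.symm_apply_eq.2 (h.apply_apply x).symm]
  rw [← Finset.card_add_card_compl O, himage, Finset.card_map, two_mul]

lemma exchangesCompl_of_coe_eq_orbit {α : Type*} {K : Subgroup (Perm α)} {a : Perm α}
    (ha : a * a = 1) (hK : ∀ k ∈ K, Commute k a) (hnt : ¬ IsPretransitive K α) {x : α}
    (hx : ∀ z, z ∈ orbit K x ∨ a z ∈ orbit K x) {O : Finset α} (hO : (O : Set α) = orbit K x) :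
    ExchangesCompl a O := by
  have hmem : ∀ z, z ∈ O ↔ z ∈ orbit K x := fun z => by rw [← hO, Finset.mem_coe]
  have hsmul : ∀ (k : K) (z : α), k • a z = a (k • z) := fun k z => Perm.congr_fun (hK k k.2).eq z
  refine ⟨ha, fun z => ?_⟩
  rw [hmem, hmem]
  refine ⟨fun haz hz => hnt ?_, fun hz => (hx z).resolve_left hz⟩
  refine (isPretransitive_iff_orbit_eq_univ x).2 (Set.eq_univ_of_forall fun y => ?_)
  refine (hx y).elim id fun ⟨l, hl⟩ => ?_
  have hay : a (a y) = y := Perm.congr_fun ha y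
  obtain ⟨k, rfl⟩ := hz
  obtain ⟨m, hm⟩ := haz
  refine ⟨l * k⁻¹ * m, ?_⟩
  simp only [mul_smul] at hm hl ⊢
  rw [hm, hsmul, hsmul, inv_smul_smul, hl, hay]

variable {α : Type*} [Fintype α] {g : ℕ → Perm α} {N i : ℕ}

lemma StringFamily.exists_halfTransitive (h : StringFamily g N) (hα : Fintype.card α = 2 * N)
    (hi : i < N)
    (htrans : IsPretransitive (Subgroup.closure (g '' insert i (commutingIndices g N i))) α)
    (hnt : ¬ IsPretransitive (Subgroup.closure (g '' commutingIndices g N i)) α) :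
    ∃ O, HalfTransitive g N O i (commutingIndices g N i) := by
  classical
  set K := Subgroup.closure (g '' commutingIndices g N i)
  have hii := h.mul_self i hi
  have hcomm : ∀ j ∈ commutingIndices g N i, Commute (g j) (g i) := fun j hj => hj.2.2
  have hK : ∀ k ∈ K, Commute k (g i) := fun k hk => by
    refine commute_of_mem_closure (t := {g i}) ?_ hk (Subgroup.subset_closure rfl)
    rintro _ ⟨j, hj, rfl⟩ _ rfl
    exact hcomm j hj
  have : Nonempty α := Fintype.card_pos_iff.1 (by omega)
  obtain ⟨x⟩ := this
  have hx : ∀ z, z ∈ orbit K x ∨ g i z ∈ orbit K x := fun z => by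
    obtain ⟨f, rfl⟩ := htrans.exists_smul_eq x z
    obtain ⟨k, hk, hfk | hfk⟩ := exists_eq_or_eq_mul_of_mem_closure_image_insert hii hcomm f.2
    · exact Or.inl ⟨⟨k, hk⟩, (Perm.congr_fun hfk x).symm⟩
    · refine Or.inr ⟨⟨k, hk⟩, Perm.congr_fun (?_ : k = g i * f) x⟩
      rw [hfk, (hK k hk).eq, ← mul_assoc, hii, one_mul]
  have hO : ((orbit K x).toFinset : Set α) = orbit K x := Set.coe_toFinset _
  have hex := exchangesCompl_of_coe_eq_orbit hii hK hnt hx hO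
  refine ⟨(orbit K x).toFinset, ⟨?_, hex, fun j hj => hj.1, fun hj => hj.2.1 rfl,
    fun j hj hji => ⟨hj, by omega, h.commute hji hj hi⟩, hcomm, fun f hf y hy => ?_,
    fun y hy z hz => ?_⟩⟩
  · have := hex.two_mul_card
    omega
  · rw [Set.mem_toFinset] at hy ⊢
    exact (mem_orbit_of_mem_orbit (⟨f, hf⟩ : K) hy)
  · rw [Set.mem_toFinset] at hy hz
    rw [← orbit_eq_iff.2 hy] at hz
    obtain ⟨f, hf⟩ := hz
    exact ⟨f, f.2, hf⟩

lemma StringFamily.eq_add_one_or_of_not_commute {G : Type*} [Group G] {g : ℕ → G}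
    (h : StringFamily g N) (hi : i < N) {j : ℕ} (hj : j < N) (hnc : ¬ Commute (g j) (g i)) :
    j = i + 1 ∨ i = j + 1 := by
  by_contra hn
  refine hnc ((eq_or_ne j i).elim (fun hji => hji ▸ Commute.refl _) fun hji => ?_)
  exact h.commute (by omega) hj hi

lemma StringFamily.even_orderOf_of_not_isPretransitive (h : StringFamily g N) (hN : 7 ≤ N)
    (hα : Fintype.card α = 2 * N) (hi : i < N)
    (htrans : IsPretransitive (Subgroup.closure (g '' insert i (commutingIndices g N i))) α)
    (hnt : ¬ IsPretransitive (Subgroup.closure (g '' commutingIndices g N i)) α) {j : ℕ}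
    (hj : j < N) (hnc : ¬ Commute (g j) (g i)) : Even (orderOf (g i * g j)) := by
  obtain ⟨O, hO⟩ := h.exists_halfTransitive hα hi htrans hnt
  exact hO.even_orderOf_of_consecutive h hN hi hj (h.eq_add_one_or_of_not_commute hi hj hnc)
    fun hjC => hnc hjC.2.2

end IntransitiveCommutingFamily

section QuotientFamily

/-- The increasing map from `ℕ` onto the natural numbers other than `i`. -/
def skip (i j : ℕ) : ℕ := if j < i then j else j + 1

lemma skip_ne (i j : ℕ) : skip i j ≠ i := by
  unfold skip
  split_ifs <;> omega

lemma skip_injective (i : ℕ) : Function.Injective (skip i) := by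
  intro j k h
  unfold skip at h
  split_ifs at h <;> omega

lemma skip_add_two_le (i : ℕ) {j k : ℕ} (h : j + 2 ≤ k) : skip i j + 2 ≤ skip i k := by
  unfold skip
  split_ifs <;> omega

lemma skip_lt {N i j : ℕ} (hi : i < N + 1) : skip i j < N + 1 ↔ j < N := by
  unfold skip
  split_ifs <;> omega

lemma exists_skip_eq {i j : ℕ} (h : j ≠ i) : ∃ k, skip i k = j := by
  unfold skip
  rcases Nat.lt_or_ge j i with hj | hj
  · exact ⟨j, if_pos hj⟩
  · refine ⟨j - 1, ?_⟩
    split_ifs <;> omega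

lemma insert_image_skip_subset_Iio {N i : ℕ} (hi : i < N + 1) {J : Set ℕ} (hJ : J ⊆ Set.Iio N) :
    insert i (skip i '' J) ⊆ Set.Iio (N + 1) := by
  rintro _ (rfl | ⟨j, hj, rfl⟩)
  · exact hi
  · exact (skip_lt hi).2 (hJ hj)

variable {G : Type*} [Group G] {g : ℕ → G} {N i : ℕ}

/-- The indices of the members not commuting with `g i`, after the others have been renumbered by
`skip i`. -/
def noncommutingIndices (g : ℕ → G) (N i : ℕ) : Set ℕ :=
  {j | j < N ∧ ¬ Commute (g (skip i j)) (g i)}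

lemma commute_of_notMem_noncommutingIndices {j : ℕ} (hj : j < N)
    (hjD : j ∉ noncommutingIndices g N i) : Commute (g (skip i j)) (g i) :=
  not_not.1 fun hn => hjD ⟨hj, hn⟩

lemma commutingIndices_eq_image_skip (hi : i < N + 1) :
    commutingIndices g (N + 1) i = skip i '' (Set.Iio N \ noncommutingIndices g N i) := by
  ext k
  constructor
  · rintro ⟨hk, hki, hc⟩
    obtain ⟨l, rfl⟩ := exists_skip_eq hki
    exact ⟨l, ⟨(skip_lt hi).1 hk, fun hl => hl.2 hc⟩, rfl⟩
  · rintro ⟨l, ⟨hl, hlD⟩, rfl⟩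
    exact ⟨(skip_lt hi).2 hl, skip_ne i l, commute_of_notMem_noncommutingIndices hl hlD⟩

namespace StringFamily

lemma apply_ne_apply (h : StringFamily g N) {i j : ℕ} (hi : i < N) (hj : j < N) (hij : i ≠ j) :
    g i ≠ g j := fun he =>
  h.ne_one i hi <| Subgroup.disjoint_def.1
    (h.disjoint_closure {i} (Set.singleton_subset_iff.2 hi) {j} (Set.singleton_subset_iff.2 hj)
      (Set.disjoint_singleton.2 hij))
    (apply_mem_closure_image rfl) (he ▸ apply_mem_closure_image rfl)

lemma add_one_eq_or_eq_of_mem_noncommutingIndices (h : StringFamily g (N + 1)) (hi : i < N + 1)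
    {j : ℕ} (hj : j ∈ noncommutingIndices g N i) : j + 1 = i ∨ j = i := by
  have hnear := h.eq_add_one_or_of_not_commute hi ((skip_lt hi).2 hj.1) hj.2
  unfold skip at hnear
  split_ifs at hnear <;> omega

end StringFamily

/-- A family of involutions `w 0, …, w (N - 1)` in the centralizer of `g i`: `w j` is `g (skip i j)`
if this commutes with `g i`, and otherwise an involution of the dihedral group generated by `g i`
and `g (skip i j)`. -/
structure CentralFamily (g : ℕ → G) (N i : ℕ) (w : ℕ → Subgroup.centralizer {g i}) : Prop where
  mem_closure : ∀ j < N, (w j : G) ∈ Subgroup.closure {g i, g (skip i j)}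
  mul_self : ∀ j < N, w j * w j = 1
  coe_ne_one : ∀ j < N, (w j : G) ≠ 1
  coe_ne : ∀ j < N, (w j : G) ≠ g i
  coe_eq : ∀ j < N, Commute (g (skip i j)) (g i) → (w j : G) = g (skip i j)

lemma StringFamily.exists_centralFamily [Finite G] (h : StringFamily g (N + 1)) (hi : i < N + 1)
    (heven : ∀ j < N + 1, ¬ Commute (g j) (g i) → Even (orderOf (g i * g j))) :
    ∃ w, CentralFamily g N i w := by
  have hex : ∀ j, ∃ z : Subgroup.centralizer {g i}, j < N →
      (z : G) ∈ Subgroup.closure {g i, g (skip i j)} ∧ z * z = 1 ∧ (z : G) ≠ 1 ∧ (z : G) ≠ g i ∧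
        (Commute (g (skip i j)) (g i) → (z : G) = g (skip i j)) := by
    intro j
    by_cases hj : j < N
    swap
    · exact ⟨1, fun hj' => absurd hj' hj⟩
    have hj' : skip i j < N + 1 := (skip_lt hi).2 hj
    by_cases hc : Commute (g (skip i j)) (g i)
    · exact ⟨⟨g (skip i j), Subgroup.mem_centralizer_singleton_iff.2 hc.eq⟩, fun _ =>
        ⟨Subgroup.subset_closure (Set.mem_insert_of_mem _ rfl), Subtype.ext (h.mul_self _ hj'),
          h.ne_one _ hj', h.apply_ne_apply hj' hi (skip_ne i j), fun _ => rfl⟩⟩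
    · obtain ⟨z, hz, hzz, hz1, hzi, hzc, -⟩ := exists_central_involution (h.mul_self i hi)
        (h.mul_self _ hj') (h.ne_one _ hj') (heven _ hj' hc)
      exact ⟨⟨z, Subgroup.mem_centralizer_singleton_iff.2 hzc.eq⟩, fun _ =>
        ⟨hz, Subtype.ext hzz, hz1, hzi, fun hc' => absurd hc' hc⟩⟩
  choose w hw using hex
  exact ⟨w, fun j hj => (hw j hj).1, fun j hj => (hw j hj).2.1, fun j hj => (hw j hj).2.2.1,
    fun j hj => (hw j hj).2.2.2.1, fun j hj => (hw j hj).2.2.2.2⟩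

namespace CentralFamily

variable {w : ℕ → Subgroup.centralizer {g i}} (hw : CentralFamily g N i w)
include hw

lemma coe_mem_closure {J : Set ℕ} (hJ : J ⊆ Set.Iio N) {z : Subgroup.centralizer {g i}}
    (hz : z ∈ Subgroup.closure (w '' J)) :
    (z : G) ∈ Subgroup.closure (g '' insert i (skip i '' J)) := by
  have hle : (Subgroup.closure (w '' J)).map (Subgroup.subtype _) ≤
      Subgroup.closure (g '' insert i (skip i '' J)) := by
    rw [MonoidHom.map_closure, Subgroup.closure_le]
    rintro _ ⟨_, ⟨j, hj, rfl⟩, rfl⟩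
    refine Subgroup.closure_mono ?_ (hw.mem_closure j (hJ hj))
    rintro _ (rfl | rfl)
    · exact ⟨i, Or.inl rfl, rfl⟩
    · exact ⟨skip i j, Or.inr ⟨j, hj, rfl⟩, rfl⟩
  exact hle ⟨z, hz, rfl⟩

lemma exists_coe_eq {J : Set ℕ} (hJ : J ⊆ Set.Iio N \ noncommutingIndices g N i) {k : G}
    (hk : k ∈ Subgroup.closure (g '' (skip i '' J))) :
    ∃ z ∈ Subgroup.closure (w '' J), (z : G) = k := by
  have hle : Subgroup.closure (g '' (skip i '' J)) ≤
      (Subgroup.closure (w '' J)).map (Subgroup.subtype _) := by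
    rw [MonoidHom.map_closure]
    refine Subgroup.closure_mono ?_
    rintro _ ⟨_, ⟨j, hj, rfl⟩, rfl⟩
    exact ⟨w j, ⟨j, hj, rfl⟩, hw.coe_eq j (hJ hj).1
      (commute_of_notMem_noncommutingIndices (hJ hj).1 (hJ hj).2)⟩
  exact hle hk

lemma commute_of_notMem (h : StringFamily g (N + 1)) (hi : i < N + 1) {j k : ℕ} (hj : j < N)
    (hk : k < N) (hjk : j + 2 ≤ k ∨ k + 2 ≤ j) (hjD : j ∉ noncommutingIndices g N i) :
    Commute (w j) (w k) := by
  have hjc := commute_of_notMem_noncommutingIndices hj hjD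
  refine Subtype.ext (Commute.eq ?_)
  rw [hw.coe_eq j hj hjc]
  refine commute_of_mem_closure (s := {g (skip i j)}) ?_ (Subgroup.subset_closure rfl)
    (hw.mem_closure k hk)
  rintro _ rfl _ (rfl | rfl)
  · exact hjc
  · exact h.commute (hjk.imp (skip_add_two_le i) (skip_add_two_le i)) ((skip_lt hi).2 hj)
      ((skip_lt hi).2 hk)

-- At most two consecutive indices are noncommuting, so one of two distant ones is not.
lemma commute (h : StringFamily g (N + 1)) (hi : i < N + 1) {j k : ℕ} (hjk : j + 2 ≤ k)
    (hk : k < N) : Commute (w j) (w k) := by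
  have hj : j < N := by omega
  by_cases hjD : j ∈ noncommutingIndices g N i
  · refine (hw.commute_of_notMem h hi hk hj (Or.inr hjk) fun hkD => ?_).symm
    have := h.add_one_eq_or_eq_of_mem_noncommutingIndices hi hjD
    have := h.add_one_eq_or_eq_of_mem_noncommutingIndices hi hkD
    omega
  · exact hw.commute_of_notMem h hi hj hk (Or.inl hjk) hjD

variable {H : Type*} [Group H] {π : Subgroup.centralizer {g i} →* H}

lemma map_mem_map_closure (hii : g i * g i = 1)
    (hπ : ∀ z : Subgroup.centralizer {g i}, (z : G) = g i → π z = 1) {J : Set ℕ}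
    (hJ : J ⊆ Set.Iio N \ noncommutingIndices g N i) {y : Subgroup.centralizer {g i}}
    (hy : (y : G) ∈ Subgroup.closure (g '' insert i (skip i '' J))) :
    π y ∈ (Subgroup.closure (w '' J)).map π := by
  obtain ⟨k, hk, hyk⟩ := exists_eq_or_eq_mul_of_mem_closure_image_insert hii
    (by
      rintro _ ⟨j, hj, rfl⟩
      exact commute_of_notMem_noncommutingIndices (hJ hj).1 (hJ hj).2) hy
  obtain ⟨v, hv, rfl⟩ := hw.exists_coe_eq hJ hk
  refine ⟨v, hv, ?_⟩
  rcases hyk with hyk | hyk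
  · rw [Subtype.ext hyk]
  · have hvy := hπ (v⁻¹ * y) (by simp [hyk])
    rwa [map_mul, map_inv, inv_mul_eq_one] at hvy

variable (hker : ∀ z : Subgroup.centralizer {g i},
    (z : G) ∈ Subgroup.closure (g '' Set.Iio (N + 1)) → π z = 1 → (z : G) = 1 ∨ (z : G) = g i)
include hker

lemma coe_mem_closure_of_map_eq (hi : i < N + 1) {J K : Set ℕ} (hJ : J ⊆ Set.Iio N)
    (hK : K ⊆ Set.Iio N) {y z : Subgroup.centralizer {g i}} (hy : y ∈ Subgroup.closure (w '' J))
    (hz : z ∈ Subgroup.closure (w '' K)) (hyz : π y = π z) :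
    (y : G) ∈ Subgroup.closure (g '' insert i (skip i '' K)) := by
  have hmono : ∀ L ⊆ Set.Iio N, Subgroup.closure (g '' insert i (skip i '' L)) ≤
      Subgroup.closure (g '' Set.Iio (N + 1)) := fun L hL =>
    Subgroup.closure_mono (Set.image_mono (insert_image_skip_subset_Iio hi hL))
  have hzK := hw.coe_mem_closure hK hz
  have hquot := hker (z⁻¹ * y)
    (Subgroup.mul_mem _ (Subgroup.inv_mem _ (hmono K hK hzK))
      (hmono J hJ (hw.coe_mem_closure hJ hy)))
    (by rw [map_mul, map_inv, hyz, inv_mul_cancel])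
  rw [← mul_inv_cancel_left (z : G) y]
  refine Subgroup.mul_mem _ hzK ?_
  rcases hquot with hquot | hquot
  · rw [show (z : G)⁻¹ * y = 1 from hquot]
    exact Subgroup.one_mem _
  · rw [show (z : G)⁻¹ * y = g i from hquot]
    exact apply_mem_closure_image (Set.mem_insert i _)

lemma intersectionPropertyOff (hi : i < N + 1) (hii : g i * g i = 1)
    (hip : IntersectionPropertyOff g (N + 1) ∅)
    (hπ : ∀ z : Subgroup.centralizer {g i}, (z : G) = g i → π z = 1) :
    IntersectionPropertyOff (fun j => π (w j)) N (noncommutingIndices g N i) := by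
  have himage : ∀ J : Set ℕ, Subgroup.closure ((fun j => π (w j)) '' J) =
      (Subgroup.closure (w '' J)).map π := fun J => by
    rw [MonoidHom.map_closure, Set.image_image]
  intro J hJ K hK hJK
  rw [himage, himage, himage]
  rintro _ ⟨⟨y, hy, rfl⟩, ⟨z, hz, hyz⟩⟩
  refine hw.map_mem_map_closure hii hπ
    (fun j hj => ⟨hJ hj.1, fun hjD => Set.disjoint_left.1 hJK hj hjD⟩) ?_
  rw [Set.image_inter (skip_injective i), Set.insert_inter_distrib]
  exact hip _ (insert_image_skip_subset_Iio hi hJ) _ (insert_image_skip_subset_Iio hi hK)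
    (Set.disjoint_empty _)
    ⟨hw.coe_mem_closure hJ hy, hw.coe_mem_closure_of_map_eq hker hi hJ hK hy hz hyz.symm⟩

lemma stringFamily (h : StringFamily g (N + 1)) (hi : i < N + 1)
    (hip : IntersectionPropertyOff g (N + 1) ∅)
    (hπ : ∀ z : Subgroup.centralizer {g i}, (z : G) = g i → π z = 1) :
    StringFamily (fun j => π (w j)) N where
  mul_self j hj := by rw [← map_mul, hw.mul_self j hj, map_one]
  ne_one j hj hj1 := by
    refine (hker (w j) (Subgroup.closure_mono ?_ (hw.mem_closure j hj)) hj1).elim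
      (hw.coe_ne_one j hj) (hw.coe_ne j hj)
    rintro _ (rfl | rfl)
    · exact ⟨i, hi, rfl⟩
    · exact ⟨_, (skip_lt hi).2 hj, rfl⟩
  commute_of_lt j k hjk hk := (hw.commute h hi hjk hk).map π
  disjoint_closure J hJ K hK hJK := by
    rw [disjoint_iff_inf_le]
    refine (hw.intersectionPropertyOff hker hi (h.mul_self i hi) hip hπ J hJ K hK ?_).trans_eq ?_
    · rw [hJK.inter_eq]
      exact Set.empty_disjoint _
    · rw [hJK.inter_eq, Set.image_empty, Subgroup.closure_empty]

end CentralFamily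

end QuotientFamily

section ExchangedPairs

open Equiv MulAction

namespace ExchangesCompl

variable {α : Type*} {a : Perm α} {B : Finset α} (h : ExchangesCompl a B)

open Classical in
/-- The representative in `B` of the pair `{x, a x}`. -/
noncomputable def fold (x : α) : B :=
  if hx : x ∈ B then ⟨x, hx⟩ else ⟨a x, h.apply_mem hx⟩

lemma coe_fold_of_mem {x : α} (hx : x ∈ B) : (h.fold x : α) = x := by
  rw [fold, dif_pos hx]

lemma fold_coe (q : B) : h.fold q = q :=
  Subtype.ext (h.coe_fold_of_mem q.2)

lemma coe_fold_of_notMem {x : α} (hx : x ∉ B) : (h.fold x : α) = a x := by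
  rw [fold, dif_neg hx]

lemma fold_apply (x : α) : h.fold (a x) = h.fold x := by
  refine Subtype.ext ?_
  by_cases hx : x ∈ B
  · rw [h.coe_fold_of_mem hx, h.coe_fold_of_notMem (h.apply_notMem hx), h.apply_apply]
  · rw [h.coe_fold_of_notMem hx, h.coe_fold_of_mem (h.apply_mem hx)]

lemma fold_apply_fold {z : Perm α} (hz : Commute z a) (x : α) :
    h.fold (z (h.fold x)) = h.fold (z x) := by
  by_cases hx : x ∈ B
  · rw [h.coe_fold_of_mem hx]
  · rw [h.coe_fold_of_notMem hx, show z (a x) = a (z x) from Perm.congr_fun hz.eq x, h.fold_apply]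

/-- The action of the centralizer of `a` on the pairs `{x, a x}`, each represented by its element
in `B`. -/
noncomputable def pairHom : Subgroup.centralizer {a} →* Perm B :=
  MonoidHom.toHomPerm
    { toFun := fun z q => h.fold ((z : Perm α) q)
      map_one' := funext h.fold_coe
      map_mul' := fun y z => funext fun q =>
        (h.fold_apply_fold (Subgroup.mem_centralizer_singleton_iff.1 y.2) ((z : Perm α) q)).symm }

lemma pairHom_apply (z : Subgroup.centralizer {a}) (q : B) :
    h.pairHom z q = h.fold ((z : Perm α) q) := rfl

lemma pairHom_eq_one {z : Subgroup.centralizer {a}} (hz : (z : Perm α) = a) :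
    h.pairHom z = 1 := by
  ext1 q
  rw [pairHom_apply, hz, h.fold_apply, h.fold_coe, Perm.one_apply]

lemma eq_one_or_eq_of_pairHom_eq_one {z : Subgroup.centralizer {a}}
    (hB : ∀ x y, (x ∈ B ↔ y ∈ B) → ((z : Perm α) x ∈ B ↔ (z : Perm α) y ∈ B))
    (hz : h.pairHom z = 1) : (z : Perm α) = 1 ∨ (z : Perm α) = a := by
  have hza : Commute (z : Perm α) a := Subgroup.mem_centralizer_singleton_iff.1 z.2
  have hfold : ∀ x ∈ B, (h.fold ((z : Perm α) x) : α) = x := fun x hx =>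
    congrArg Subtype.val (Perm.congr_fun hz ⟨x, hx⟩)
  by_cases hzB : ∃ x ∈ B, (z : Perm α) x ∈ B
  · obtain ⟨x, hx, hzx⟩ := hzB
    refine Or.inl (h.eq_one_of_commute hza fun y hy => ?_)
    rw [← h.coe_fold_of_mem ((hB x y (iff_of_true hx hy)).1 hzx), hfold y hy]
  · have haz : a * z = 1 := by
      refine h.eq_one_of_commute ((Commute.refl a).mul_left hza) fun y hy => ?_
      rw [Perm.mul_apply, ← h.coe_fold_of_notMem fun hzy => hzB ⟨y, hy, hzy⟩, hfold y hy]
    rw [← one_mul (z : Perm α), ← h.mul_self, mul_assoc, haz, mul_one]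
    exact Or.inr rfl

end ExchangesCompl

variable {α : Type*} {g : ℕ → Perm α} {N i : ℕ} {B : Finset α}

lemma CentralFamily.isPretransitive {w : ℕ → Subgroup.centralizer {g i}}
    (hw : CentralFamily g N i w) (h : ExchangesCompl (g i) B) (hi : i < N + 1)
    (htrans : IsPretransitive (Subgroup.closure (g '' insert i (commutingIndices g (N + 1) i))) α) :
    IsPretransitive (Subgroup.closure
      ((fun j => h.pairHom (w j)) '' (Set.Iio N \ noncommutingIndices g N i))) B := by
  have hlift : ∀ k ∈ Subgroup.closure (g '' commutingIndices g (N + 1) i),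
      ∃ z : Subgroup.centralizer {g i}, (z : Perm α) = k ∧ h.pairHom z ∈ Subgroup.closure
        ((fun j => h.pairHom (w j)) '' (Set.Iio N \ noncommutingIndices g N i)) := by
    intro k hk
    rw [commutingIndices_eq_image_skip hi] at hk
    obtain ⟨z, hz, hzk⟩ := hw.exists_coe_eq subset_rfl hk
    refine ⟨z, hzk, ?_⟩
    rw [← Set.image_image h.pairHom w, ← MonoidHom.map_closure]
    exact ⟨z, hz, rfl⟩
  refine ⟨fun p q => ?_⟩
  obtain ⟨f, hf⟩ := htrans.exists_smul_eq (p : α) (q : α)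
  have hfpq : (f : Perm α) p = q := hf
  obtain ⟨k, hk, hfk⟩ := exists_eq_or_eq_mul_of_mem_closure_image_insert h.mul_self
    (fun j hj => hj.2.2) f.2
  obtain ⟨z, rfl, hz⟩ := hlift k hk
  refine ⟨⟨_, hz⟩, (?_ : h.fold ((z : Perm α) p) = q)⟩
  rcases hfk with hfk | hfk
  · rw [← hfk, hfpq, h.fold_coe]
  · rw [hfk, Subgroup.mem_centralizer_singleton_iff.1 z.2, Perm.mul_apply] at hfpq
    rw [← h.fold_apply, hfpq, h.fold_coe]

theorem StringFamily.isPretransitive_commutingIndices [Finite α] (h : StringFamily g (N + 1))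
    (hN : 6 ≤ N) (hip : IntersectionPropertyOff g (N + 1) ∅) (hcard : B.card = N + 1)
    (hblock : ∀ f ∈ Subgroup.closure (g '' Set.Iio (N + 1)), ∀ x y, (x ∈ B ↔ y ∈ B) →
      (f x ∈ B ↔ f y ∈ B))
    (hi : i < N + 1) (hex : ExchangesCompl (g i) B)
    (htrans : IsPretransitive (Subgroup.closure (g '' insert i (commutingIndices g (N + 1) i))) α)
    {j : ℕ} (hj : j < N + 1) (hnc : ¬ Commute (g j) (g i)) :
    IsPretransitive (Subgroup.closure (g '' commutingIndices g (N + 1) i)) α := by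
  by_contra hnt
  have := Fintype.ofFinite α
  have hα : Fintype.card α = 2 * (N + 1) := by rw [← hex.two_mul_card, hcard]
  obtain ⟨w, hw⟩ := h.exists_centralFamily hi fun _ =>
    h.even_orderOf_of_not_isPretransitive (by omega) hα hi htrans hnt
  have hπ : ∀ z : Subgroup.centralizer {g i}, (z : Perm α) = g i → hex.pairHom z = 1 :=
    fun _ => hex.pairHom_eq_one
  have hker : ∀ z : Subgroup.centralizer {g i},
      (z : Perm α) ∈ Subgroup.closure (g '' Set.Iio (N + 1)) → hex.pairHom z = 1 →
        (z : Perm α) = 1 ∨ (z : Perm α) = g i :=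
    fun z hz => hex.eq_one_or_eq_of_pairHom_eq_one (hblock z hz)
  have hne : (noncommutingIndices g N i).Nonempty := by
    obtain ⟨k, rfl⟩ := exists_skip_eq fun hji : j = i => hnc (hji ▸ Commute.refl (g j))
    exact ⟨k, (skip_lt hi).1 hj, hnc⟩
  refine (hw.stringFamily hker h hi hip hπ).not_isPretransitive ?_ hN (fun j hj => hj.1)
    (fun d hd => h.add_one_eq_or_eq_of_mem_noncommutingIndices hi hd) hne
    (hw.intersectionPropertyOff hker hi (h.mul_self i hi) hip hπ) (hw.isPretransitive hex hi htrans)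
  rw [Fintype.card_coe, hcard]

end ExchangedPairs

section Extension

variable {r : ℕ}

/-- The extension of a finite family of group elements to a family indexed by `ℕ`, with value `1`
outside the original index set. -/
def extendByOne {G : Type*} [Group G] (ρ : Fin r → G) (j : ℕ) : G :=
  if h : j < r then ρ ⟨j, h⟩ else 1

lemma extendByOne_val {G : Type*} [Group G] (ρ : Fin r → G) (j : Fin r) : extendByOne ρ j = ρ j :=
  dif_pos j.2

lemma extendByOne_image {G : Type*} [Group G] (ρ : Fin r → G) {J : Set ℕ} (hJ : J ⊆ Set.Iio r) :
    extendByOne ρ '' J = ρ '' (Fin.val ⁻¹' J) := by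
  rw [← Fin.range_val] at hJ
  conv_lhs => rw [← Set.image_preimage_eq_of_subset hJ, Set.image_image]
  simp only [extendByOne_val]

lemma extendByOne_image_Iio {G : Type*} [Group G] (ρ : Fin r → G) :
    extendByOne ρ '' Set.Iio r = Set.range ρ := by
  rw [extendByOne_image ρ subset_rfl, ← Fin.range_val, Set.preimage_range, Set.image_univ]

lemma extendByOne_image_commutingIndices {G : Type*} [Group G] (ρ : Fin r → G) (i : Fin r) :
    extendByOne ρ '' commutingIndices (extendByOne ρ) r i =
      ρ '' {j | j ≠ i ∧ Commute (ρ j) (ρ i)} := by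
  rw [extendByOne_image ρ fun j hj => hj.1]
  congr 1
  ext j
  simp only [commutingIndices, Set.mem_preimage, Set.mem_ofPred_eq, extendByOne_val, j.2, true_and,
    ne_eq, Fin.val_inj]

variable {n : ℕ} {ρ : Fin r → Equiv.Perm (Fin n)}

lemma IsSggi.mul_self (h : IsSggi ρ) (j : Fin r) : ρ j * ρ j = 1 := by
  rw [← pow_two, ← h.1 j, pow_orderOf_eq_one]

lemma IsSggi.commute (h : IsSggi ρ) {j k : Fin r} (hjk : (j : ℕ) + 2 ≤ k) :
    Commute (ρ j) (ρ k) := by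
  refine commute_of_mul_self (h.mul_self j) (h.mul_self k) ?_
  rw [← pow_two]
  exact h.2 j k (lt_abs.2 (Or.inr (by omega)))

lemma IsStringC.intersectionPropertyOff (h : IsStringC ρ) :
    IntersectionPropertyOff (extendByOne ρ) r ∅ := by
  intro J hJ K hK _
  rw [extendByOne_image ρ hJ, extendByOne_image ρ hK,
    extendByOne_image ρ (Set.inter_subset_left.trans hJ)]
  exact (h.2 (Fin.val ⁻¹' J) (Fin.val ⁻¹' K)).le

lemma IsStringC.stringFamily (h : IsStringC ρ) : StringFamily (extendByOne ρ) r where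
  mul_self j hj := by
    rw [extendByOne_val ρ ⟨j, hj⟩]
    exact h.1.mul_self _
  ne_one j hj := by
    rw [extendByOne_val ρ ⟨j, hj⟩, ne_eq, ← orderOf_eq_one_iff, h.1.1]
    decide
  commute_of_lt j k hjk hk := by
    rw [extendByOne_val ρ ⟨j, by omega⟩, extendByOne_val ρ ⟨k, hk⟩]
    exact h.1.commute hjk
  disjoint_closure J hJ K hK hJK := by
    rw [disjoint_iff_inf_le]
    refine (h.intersectionPropertyOff J hJ K hK (Set.disjoint_empty _)).trans_eq ?_
    rw [hJK.inter_eq, Set.image_empty, Subgroup.closure_empty]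

end Extension

theorem stmt17 {n r : ℕ} (hm7 : 7 ≤ n / 2) (hn2 : Even n) (hr : r = n / 2)
    (ρ : Fin r → Equiv.Perm (Fin n)) (hstring : IsStringC ρ)
    (htrans : MulAction.IsPretransitive ↥(Subgroup.closure (Set.range ρ)) (Fin n))
    -- the two blocks B₁ = b⁻¹ 0 and B₂ = b⁻¹ 1
    (b : Fin n → Fin 2) (hbsurj : Function.Surjective b)
    (hfib : ∀ c : Fin 2, Set.ncard {x | b x = c} = n / 2)
    (hcompat : ∀ g ∈ Subgroup.closure (Set.range ρ), ∀ x y : Fin n,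
      b x = b y → b (g x) = b (g y))
    -- ρ i₀ interchanges the two blocks
    (i₀ : Fin r) (hswap : ∀ x : Fin n, b (ρ i₀ x) ≠ b x)
    -- ⟨ρ j : j ∈ C ∪ L⟩ is transitive
    (hCL : MulAction.IsPretransitive
      ↥(Subgroup.closure (ρ '' ({i | i ≠ i₀ ∧ Commute (ρ i) (ρ i₀)} ∪ {i₀}))) (Fin n))
    -- R ≠ ∅
    (hRne : {i : Fin r | i ≠ i₀ ∧ ¬ Commute (ρ i) (ρ i₀)} ≠ ∅) :
    MulAction.IsPretransitive
      ↥(Subgroup.closure (ρ '' {i | i ≠ i₀ ∧ Commute (ρ i) (ρ i₀)})) (Fin n) := by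
  obtain ⟨N, rfl⟩ : ∃ N, r = N + 1 := ⟨r - 1, by omega⟩
  obtain ⟨j, -, hj⟩ := Set.nonempty_iff_ne_empty.2 hRne
  have hmem : ∀ x, x ∈ Finset.univ.filter (b · = 0) ↔ b x = 0 := by simp
  rw [← extendByOne_image_commutingIndices]
  refine hstring.stringFamily.isPretransitive_commutingIndices (B := Finset.univ.filter (b · = 0))
    (by omega) hstring.intersectionPropertyOff ?_ ?_ i₀.2 ⟨hstring.stringFamily.mul_self _ i₀.2, ?_⟩
    ?_ j.2 ?_
  · rw [hr, ← hfib 0, ← Set.ncard_coe_finset, Finset.coe_filter_univ]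
  · intro f hf x y hxy
    rw [extendByOne_image_Iio] at hf
    rw [hmem, hmem] at hxy ⊢
    rw [hcompat f hf x y (by omega)]
  · intro x
    have := hswap x
    rw [extendByOne_val, hmem, hmem]
    omega
  · rwa [Set.image_insert_eq, extendByOne_image_commutingIndices, extendByOne_val,
      ← Set.image_insert_eq, ← Set.union_singleton]
  · rwa [extendByOne_val, extendByOne_val]
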